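/- arXiv:1008.2368 — 4 statements merged into one kernel-verified Lean document; each statement's English description precedes it below -/
import Mathlib

section
/- Let q be a prime power with q ≥ 5 and X ⊂ P³ an elliptic quadric over F_q with equation F = 0. Let G ∈ F_q[x,y,z,t] be a homogeneous polynomial of degree 3 not divisible by F (so that C = X ∩ V(G) is an effective divisor on X linearly equivalent to 3H). Then the number of points x ∈ P³(F_q) with F(x) = 0 and G(x) = 0 is at most max(3q + 3, min(4q, q + 1 + 4·⌊2√q⌋)). -/
open MvPolynomial

noncomputable section

/-- `Fp` defines an elliptic quadric in `P³` over the finite field `F`: it is a nonzero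
quadratic form, the quadric it defines is smooth (over the algebraic closure the gradient
vanishes at no nonzero point of the quadric), and the quadric contains no `F`-rational
projective line. -/
def IsEllipticQuadric (F : Type) [Field F] (Fp : MvPolynomial (Fin 4) F) : Prop :=
  Fp ≠ 0 ∧ Fp.IsHomogeneous 2 ∧
  (∀ v : Fin 4 → AlgebraicClosure F, v ≠ 0 → MvPolynomial.aeval v Fp = 0 →
      ∃ i, MvPolynomial.aeval v (MvPolynomial.pderiv i Fp) ≠ 0) ∧
  ¬ ∃ u w : Fin 4 → F, LinearIndependent F ![u, w] ∧
      ∀ a b : F, MvPolynomial.eval (a • u + b • w) Fp = 0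


lemma aeval_scale {σ R S : Type*} [Fintype σ] [CommRing R] [CommRing S] [Algebra R S]
    {P : MvPolynomial σ R} {n : ℕ} (hP : P.IsHomogeneous n) (c : S) (v : σ → S) :
    aeval (fun i => c * v i) P = c ^ n * aeval v P := by
  rw [aeval_def, aeval_def, eval₂_eq', eval₂_eq', Finset.mul_sum]
  refine Finset.sum_congr rfl fun d hd => ?_
  have h : d.degree = n := by
    by_contra h
    exact (mem_support_iff.mp hd) (hP.coeff_eq_zero h)
  have h2 : ∑ i, d i = n := by rw [← h, Finsupp.degree_eq_sum]
  simp_rw [mul_pow]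
  rw [Finset.prod_mul_distrib, Finset.prod_pow_eq_pow_sum, h2]
  ring

lemma exists_matrix_of_quadratic {R : Type*} [CommRing R] {P : MvPolynomial (Fin 4) R}
    (hP : P.IsHomogeneous 2) :
    ∃ A : Matrix (Fin 4) (Fin 4) R, P = ∑ i, ∑ j, C (A i j) * (X i * X j) := by
  have h : P ∈ (homogeneousSubmodule (Fin 4) R 1) ^ 2 := by
    rw [homogeneousSubmodule_one_pow]; exact hP
  rw [homogeneousSubmodule_one_eq_span_X, pow_two, Submodule.span_mul_span] at h
  clear hP
  induction h using Submodule.span_induction with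
  | mem x hx =>
    obtain ⟨_, ⟨i, rfl⟩, _, ⟨j, rfl⟩, rfl⟩ := hx
    refine ⟨fun k l => if k = i then if l = j then 1 else 0 else 0, ?_⟩
    rw [Finset.sum_eq_single i, Finset.sum_eq_single j]
    · simp
    · intro b _ hb; simp [hb]
    · simp
    · intro b _ hb; simp [hb]
    · simp
  | zero => exact ⟨0, by simp⟩
  | add x y _ _ hx hy =>
    obtain ⟨A, hA⟩ := hx
    obtain ⟨B, hB⟩ := hy
    exact ⟨A + B, by simp [hA, hB, add_mul, Finset.sum_add_distrib]⟩
  | smul a x _ hx =>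
    obtain ⟨A, hA⟩ := hx
    exact ⟨a • A, by simp [hA, Finset.smul_sum, smul_eq_C_mul, mul_assoc]⟩

/-- cancelling the variable `X 1` -/
lemma dvd_of_dvd_X_pow_mul {F : Type*} [Field F] {P G : MvPolynomial (Fin 4) F}
    (hP : ¬ (X 1 ∣ P)) (n : ℕ) (h : P ∣ X 1 ^ n * G) : P ∣ G := by
  induction n with
  | zero => simpa using h
  | succ n ih =>
    apply ih
    obtain ⟨A, hA⟩ := h
    have hp : Prime (X 1 : MvPolynomial (Fin 4) F) := X_prime
    have : (X 1 : MvPolynomial (Fin 4) F) ∣ P * A := ⟨X 1 ^ n * G, by rw [← hA]; ring⟩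
    rcases hp.dvd_or_dvd this with h | ⟨B, rfl⟩
    · exact absurd h hP
    · refine ⟨B, mul_left_cancel₀ hp.ne_zero ?_⟩
      linear_combination hA

/-- Nullstellensatz for the quadric in normal form. -/
lemma dvd_of_vanish {F K : Type*} [Field F] [Field K] [Algebra F K] [Infinite K]
    (a b c : F) (ha : a ≠ 0) {G : MvPolynomial (Fin 4) F} (hG : G.IsHomogeneous 3)
    (h : ∀ z t : K, aeval ![-(algebraMap F K a * z ^ 2 + algebraMap F K b * z * t +
      algebraMap F K c * t ^ 2), 1, z, t] G = 0) :
    (X 0 * X 1 + C a * X 2 ^ 2 + C b * X 2 * X 3 + C c * X 3 ^ 2 : MvPolynomial (Fin 4) F) ∣ G := by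
  set P : MvPolynomial (Fin 4) F :=
    X 0 * X 1 + C a * X 2 ^ 2 + C b * X 2 * X 3 + C c * X 3 ^ 2 with hPdef
  have hinj : Function.Injective (algebraMap F K) := (algebraMap F K).injective
  let Q : MvPolynomial (Fin 4) F := C a * X 2 ^ 2 + C b * X 2 * X 3 + C c * X 3 ^ 2
  let R : MvPolynomial (Fin 4) F := aeval ![-Q, X 1 * X 1, X 1 * X 2, X 1 * X 3] G
  have hR : R = 0 := by
    have : X 1 * R = 0 := by
      apply map_injective _ hinj
      apply MvPolynomial.funext
      intro v
      simp only [eval_map, ← aeval_def, map_mul, map_zero, aeval_X]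
      by_cases hv : v 1 = 0
      · simp [hv]
      · apply mul_eq_zero_of_right
        have e : (aeval v R : K) = aeval (fun i => v 1 ^ 2 * (![-(algebraMap F K a * (v 2 / v 1) ^ 2 +
            algebraMap F K b * (v 2 / v 1) * (v 3 / v 1) +
            algebraMap F K c * (v 3 / v 1) ^ 2), 1, v 2 / v 1, v 3 / v 1] : Fin 4 → K) i) G := by
          simp only [R]
          rw [← AlgHom.comp_apply, comp_aeval]
          congr 2
          funext i
          fin_cases i
          · simp [Q]; field_simp
          · simp; ring
          · simp; field_simp
          · simp; field_simp
        rw [e, aeval_scale hG, h, mul_zero]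
    exact (mul_eq_zero.mp this).resolve_left (X_ne_zero 1)
  have hdvd : P ∣ X 1 ^ 3 * G := by
    have e1 : X 1 ^ 3 * G = aeval (fun i => X 1 * X i) G := by
      rw [aeval_scale hG]; simp
    rw [e1, ← Ideal.mem_span_singleton, ← Ideal.Quotient.eq_zero_iff_mem]
    have e2 : Ideal.Quotient.mkₐ F (Ideal.span {P}) (aeval (fun i => X 1 * X i) G) =
        Ideal.Quotient.mkₐ F (Ideal.span {P}) R := by
      simp only [R]
      rw [← AlgHom.comp_apply, comp_aeval, ← AlgHom.comp_apply, comp_aeval]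
      congr 2
      funext i
      fin_cases i
      · simp only [Ideal.Quotient.mkₐ_eq_mk]
        rw [Ideal.Quotient.eq, Ideal.mem_span_singleton]
        refine ⟨1, ?_⟩
        simp [Q, hPdef]; ring
      · simp
      · simp
      · simp
    rw [hR, map_zero] at e2
    exact e2
  refine dvd_of_dvd_X_pow_mul ?_ 3 hdvd
  rintro ⟨B, hB⟩
  have := congrArg (eval ![0,0,1,0]) hB
  simp [hPdef] at this
  exact ha this

lemma biv_aeval {K : Type*} [Field K] (q : ℕ) (P : MvPolynomial (Fin 2) K) :
    aeval ![Polynomial.X, Polynomial.X ^ q] P =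
      ∑ d ∈ P.support, Polynomial.monomial (d 0 + q * d 1) (coeff d P) := by
  rw [aeval_def, eval₂_eq']
  refine Finset.sum_congr rfl fun d _ => ?_
  simp [Fin.prod_univ_two, ← Polynomial.C_mul_X_pow_eq_monomial, pow_add, pow_mul]

lemma biv_natDegree {K : Type*} [Field K] (q : ℕ) (P : MvPolynomial (Fin 2) K)
    (hP : ∀ i, P.degreeOf i ≤ 3) :
    (aeval ![Polynomial.X, Polynomial.X ^ q] P : Polynomial K).natDegree ≤ 3 * q + 3 := by
  rw [biv_aeval]
  apply Polynomial.natDegree_sum_le_of_forall_le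
  intro d hd
  refine (Polynomial.natDegree_monomial_le _).trans ?_
  have h0 := (monomial_le_degreeOf 0 hd).trans (hP 0)
  have h1 := (monomial_le_degreeOf 1 hd).trans (hP 1)
  nlinarith

lemma biv_eq_zero {K : Type*} [Field K] (q : ℕ) (hq : 3 < q) (P : MvPolynomial (Fin 2) K)
    (hP : ∀ i, P.degreeOf i ≤ 3)
    (h : (aeval ![Polynomial.X, Polynomial.X ^ q] P : Polynomial K) = 0) : P = 0 := by
  by_contra hne
  obtain ⟨m, hm⟩ := ne_zero_iff.mp hne
  have hms : m ∈ P.support := mem_support_iff.mpr hm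
  rw [biv_aeval] at h
  have h2 := congrArg (fun p => Polynomial.coeff p (m 0 + q * m 1)) h
  simp only [Polynomial.finsetSum_coeff, Polynomial.coeff_zero] at h2
  rw [Finset.sum_eq_single m] at h2
  · simp at h2; exact hm h2
  · intro d hd hdm
    rw [Polynomial.coeff_monomial, if_neg]
    intro he
    apply hdm
    have a0 := (monomial_le_degreeOf 0 hd).trans (hP 0)
    have b0 := (monomial_le_degreeOf 0 hms).trans (hP 0)
    have h1 : d 1 = m 1 := by
      rcases lt_trichotomy (d 1) (m 1) with h | h | h
      · exfalso; nlinarith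
      · exact h
      · exfalso; nlinarith
    have h0 : d 0 = m 0 := by rw [h1] at he; omega
    ext i; fin_cases i
    · exact h0
    · exact h1
  · intro h; exact absurd hms h

lemma degreeOf_subst {F K : Type*} [Field F] [Field K] [Algebra F K]
    {G : MvPolynomial (Fin 4) F} {n : ℕ} (hG : G.IsHomogeneous n) (f : Fin 4 → MvPolynomial (Fin 2) K)
    (i : Fin 2) (hf : ∀ j, (f j).degreeOf i ≤ 1) : (aeval f G).degreeOf i ≤ n := by
  rw [aeval_def, eval₂_eq']
  refine (degreeOf_sum_le _ _ _).trans (Finset.sup_le fun d hd => ?_)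
  have h : d.degree = n := by
    by_contra h
    exact (mem_support_iff.mp hd) (hG.coeff_eq_zero h)
  have h2 : ∑ i, d i = n := by rw [← h, Finsupp.degree_eq_sum]
  rw [IsScalarTower.algebraMap_apply F K (MvPolynomial (Fin 2) K), algebraMap_eq]
  refine (degreeOf_C_mul_le _ _ _).trans ((degreeOf_prod_le _ _ _).trans ?_)
  rw [← h2]
  refine Finset.sum_le_sum fun j _ => (degreeOf_pow_le _ _ _).trans ?_
  nlinarith [hf j, Nat.zero_le (d j)]

lemma mem_of_pow_card {F K : Type*} [Field F] [Fintype F] [Field K] [Algebra F K] (x : K)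
    (h : x ^ Fintype.card F = x) : ∃ a : F, algebraMap F K a = x := by
  classical
  have hne : (Polynomial.X ^ Fintype.card F - Polynomial.X : Polynomial K) ≠ 0 :=
    FiniteField.X_pow_card_sub_X_ne_zero K Fintype.one_lt_card
  have hsub : (Finset.univ : Finset F).image (algebraMap F K) ⊆
      (Polynomial.X ^ Fintype.card F - Polynomial.X : Polynomial K).roots.toFinset := by
    intro y hy
    obtain ⟨a, _, rfl⟩ := Finset.mem_image.mp hy
    rw [Multiset.mem_toFinset, Polynomial.mem_roots hne]
    simp [← map_pow, FiniteField.pow_card]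
  have heq := Finset.eq_of_subset_of_card_le hsub (by
    rw [Finset.card_image_of_injective _ (algebraMap F K).injective, Finset.card_univ]
    refine (Multiset.toFinset_card_le _).trans ((Polynomial.card_roots' _).trans ?_)
    rw [FiniteField.X_pow_card_sub_X_natDegree_eq K Fintype.one_lt_card])
  have hx : x ∈ (Finset.univ : Finset F).image (algebraMap F K) := by
    rw [heq, Multiset.mem_toFinset, Polynomial.mem_roots hne]
    simp [h]
  obtain ⟨a, _, ha⟩ := Finset.mem_image.mp hx
  exact ⟨a, ha⟩

lemma core_count {F : Type*} (K : Type*) [Field F] [Fintype F] [Field K] [Algebra F K]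
    [IsAlgClosed K] [Infinite K] (hq5 : 5 ≤ Fintype.card F)
    (a b c : F) (hani : ∀ z t : F, a * z ^ 2 + b * z * t + c * t ^ 2 = 0 → z = 0 ∧ t = 0)
    {G : MvPolynomial (Fin 4) F} (hG : G.IsHomogeneous 3)
    (hnd : ¬ (X 0 * X 1 + C a * X 2 ^ 2 + C b * X 2 * X 3 + C c * X 3 ^ 2 :
      MvPolynomial (Fin 4) F) ∣ G) :
    {w : F × F | eval ![-(a * w.1 ^ 2 + b * w.1 * w.2 + c * w.2 ^ 2), 1, w.1, w.2] G = 0}.ncard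
      ≤ 3 * Fintype.card F + 3 := by
  classical
  set q := Fintype.card F with hqdef
  let ι := algebraMap F K
  have hinj : Function.Injective ι := ι.injective
  have ha : a ≠ 0 := by
    intro h
    have := hani 1 0 (by simp [h])
    simp at this
  have hιa : ι a ≠ 0 := by simpa using ha
  obtain ⟨ω, hω⟩ : ∃ ω : K, ι a * ω ^ 2 - ι b * ω + ι c = 0 := by
    obtain ⟨ω, hω⟩ := IsAlgClosed.exists_root
      (Polynomial.C (ι a) * Polynomial.X ^ 2 + Polynomial.C (-ι b) * Polynomial.X +
        Polynomial.C (ι c)) (by rw [Polynomial.degree_quadratic hιa]; simp)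
    refine ⟨ω, ?_⟩
    simpa [Polynomial.IsRoot, sub_eq_add_neg] using hω
  have hnot : ∀ x : F, ι x ≠ ω := by
    rintro x rfl
    have := hani (-x) 1 (by
      apply hinj
      simp only [map_add, map_mul, map_pow, map_neg, map_one, map_zero]
      linear_combination hω)
    simp at this
  let φ := FiniteField.frobeniusAlgHom F K
  have hφ : ∀ x, φ x = x ^ q := fun x => rfl
  have hφι : ∀ x, φ (ι x) = ι x := fun x => φ.commutes x
  obtain ⟨ω', hω'⟩ : ∃ ω', ω' = φ ω := ⟨_, rfl⟩
  have hne : ω - ω' ≠ 0 := by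
    intro h
    obtain ⟨x, hx⟩ := mem_of_pow_card (F := F) ω (by rw [← hqdef, ← hφ, ← hω']; exact (sub_eq_zero.mp h).symm)
    exact hnot x hx
  have hr2 : ι a * ω' ^ 2 - ι b * ω' + ι c = 0 := by
    have := congrArg φ hω
    simpa only [map_add, map_sub, map_mul, map_pow, hφι, map_zero, ← hω'] using this
  have hsum : ι a * (ω + ω') = ι b := by
    apply mul_left_cancel₀ hne
    linear_combination hω - hr2
  have hprod : ι a * (ω * ω') = ι c := by
    linear_combination ω * hsum - hω
  have hfac : ∀ z t : K, ι a * z ^ 2 + ι b * z * t + ι c * t ^ 2 =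
      ι a * (z + ω * t) * (z + ω' * t) := by
    intro z t
    rw [← hsum, ← hprod]; ring
  let f : Fin 4 → MvPolynomial (Fin 2) K :=
    ![C (-ι a) * (X 0 * X 1), 1, C (ω - ω')⁻¹ * (C ω * X 1 - C ω' * X 0), C (ω - ω')⁻¹ * (X 0 - X 1)]
  let Γ : MvPolynomial (Fin 2) K := aeval f G
  have hfdeg : ∀ i j, (f j).degreeOf i ≤ 1 := by
    intro i j
    have hX : ∀ k : Fin 2, (X k : MvPolynomial (Fin 2) K).degreeOf i ≤ 1 := by
      intro k; rw [degreeOf_X]; split_ifs <;> simp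
    fin_cases j
    · refine (degreeOf_C_mul_le _ _ _).trans ((degreeOf_mul_le _ _ _).trans ?_)
      simp only [degreeOf_X]
      fin_cases i <;> simp
    · simp [f, degreeOf_one]
    · refine (degreeOf_C_mul_le _ _ _).trans ((degreeOf_sub_le _ _ _).trans (max_le ?_ ?_))
      · exact (degreeOf_C_mul_le _ _ _).trans (hX _)
      · exact (degreeOf_C_mul_le _ _ _).trans (hX _)
    · exact (degreeOf_C_mul_le _ _ _).trans ((degreeOf_sub_le _ _ _).trans (max_le (hX _) (hX _)))
  have hΓdeg : ∀ i, Γ.degreeOf i ≤ 3 := fun i => degreeOf_subst hG f i (hfdeg i)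
  -- evaluation of Γ
  have hΓev : ∀ z t : K, aeval ![z + ω * t, z + ω' * t] Γ =
      aeval ![-(ι a * z ^ 2 + ι b * z * t + ι c * t ^ 2), 1, z, t] G := by
    intro z t
    have : (aeval ![z + ω * t, z + ω' * t] Γ : K) =
        ((aeval ![z + ω * t, z + ω' * t] : MvPolynomial (Fin 2) K →ₐ[K] K).restrictScalars F)
          (aeval f G) := rfl
    rw [this, ← AlgHom.comp_apply, comp_aeval]
    congr 2
    funext i
    fin_cases i
    · simp [f, -neg_add_rev]; rw [hfac]; ring
    · simp [f]
    · simp [f]; field_simp; ring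
    · simp [f]; field_simp
  have hΓne : Γ ≠ 0 := by
    intro h0
    apply hnd
    apply dvd_of_vanish (K := K) a b c ha hG
    intro z t
    rw [← hΓev, h0, map_zero]
  let g : Polynomial K := aeval ![Polynomial.X, Polynomial.X ^ q] Γ
  have hg : g ≠ 0 := fun h => hΓne (biv_eq_zero q (by omega) Γ hΓdeg h)
  have hgdeg : g.natDegree ≤ 3 * q + 3 := biv_natDegree q Γ hΓdeg
  have hgev : ∀ u : K, g.eval u = aeval ![u, u ^ q] Γ := by
    intro u
    simp only [g]
    rw [← Polynomial.coe_aeval_eq_eval, ← AlgHom.comp_apply, comp_aeval]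
    congr 2
    funext i
    fin_cases i <;> simp
  have hcount : {w : F × F | eval ![-(a * w.1 ^ 2 + b * w.1 * w.2 + c * w.2 ^ 2), 1, w.1, w.2] G
      = 0}.ncard ≤ (g.roots.toFinset : Set K).ncard := by
    refine Set.ncard_le_ncard_of_injOn (fun w => ι w.1 + ω * ι w.2) ?_ ?_ (Finset.finite_toSet _)
    · rintro ⟨z, t⟩ hw
      simp only [Set.mem_ofPred_eq] at hw
      simp only [Finset.mem_coe, Multiset.mem_toFinset]
      rw [Polynomial.mem_roots hg, Polynomial.IsRoot, hgev]
      have : (ι z + ω * ι t) ^ q = ι z + ω' * ι t := by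
        rw [← hφ, map_add, map_mul, hφι, hφι, hω']
      rw [this, hΓev]
      have := congrArg ι hw
      rw [map_zero] at this
      rw [← this]
      rw [← coe_aeval_eq_eval, RingHom.coe_coe, ← aeval_algebraMap_apply]
      congr 2
      funext i
      fin_cases i <;> simp [ι]
    · rintro ⟨z, t⟩ _ ⟨z', t'⟩ _ h
      simp only at h
      by_cases ht : t = t'
      · subst ht
        have := hinj (add_right_cancel h)
        rw [this]
      · exfalso
        have h1 : ι t - ι t' ≠ 0 := sub_ne_zero.mpr fun h => ht (hinj h)
        apply hnot ((z' - z) / (t - t'))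
        rw [map_div₀, map_sub, map_sub, div_eq_iff h1]
        linear_combination -h
  rw [Set.ncard_coe_finset] at hcount
  exact hcount.trans ((Multiset.toFinset_card_le _).trans ((Polynomial.card_roots' _).trans hgdeg))

lemma aeval_eq_eval_self {σ R : Type*} [CommRing R] (v : σ → R) (P : MvPolynomial σ R) :
    aeval v P = eval v P := DFunLike.congr_fun (coe_aeval_eq_eval v) P

lemma eval_bind_matrix {R : Type*} [CommRing R] (M : Matrix (Fin 4) (Fin 4) R)
    (P : MvPolynomial (Fin 4) R) (v : Fin 4 → R) :
    eval v (bind₁ M.toMvPolynomial P) = eval (M.mulVec v) P := by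
  rw [← aeval_eq_eval_self, ← aeval_eq_eval_self, aeval_bind₁]
  congr 2
  funext i
  rw [aeval_eq_eval_self, Matrix.toMvPolynomial_eval_eq_apply]

lemma bind_matrix_inv {R : Type*} [CommRing R] (M N : Matrix (Fin 4) (Fin 4) R) (h : M * N = 1)
    (P : MvPolynomial (Fin 4) R) :
    bind₁ N.toMvPolynomial (bind₁ M.toMvPolynomial P) = P := by
  rw [bind₁_bind₁]
  have : (fun i => bind₁ N.toMvPolynomial (M.toMvPolynomial i)) = X := by
    funext i
    rw [← Matrix.toMvPolynomial_mul, h, Matrix.toMvPolynomial_one]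
  rw [this]; simp

lemma normal_basis {F : Type*} [Field F] (Q : QuadraticForm F (Fin 4 → F)) (p e : Fin 4 → F)
    (hp : Q p = 0) (he : QuadraticMap.polar Q p e = 1)
    (hline : ¬ ∃ u w : Fin 4 → F, LinearIndependent F ![u, w] ∧ ∀ a b : F, Q (a • u + b • w) = 0) :
    ∃ (M : Matrix (Fin 4) (Fin 4) F) (a b c : F), IsUnit M ∧ M.col 0 = p ∧
      (∀ z t : F, a * z ^ 2 + b * z * t + c * t ^ 2 = 0 → z = 0 ∧ t = 0) ∧
      ∀ v, Q (M.mulVec v) = v 0 * v 1 + a * v 2 ^ 2 + b * v 2 * v 3 + c * v 3 ^ 2 := by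
  let B := QuadraticMap.polarBilin Q
  have hB : ∀ u v, Q (u + v) = Q u + Q v + B u v := fun u v => by
    simp [B, QuadraticMap.polar]
  have hs : ∀ (c : F) u, Q (c • u) = c * c * Q u := fun c u => by
    rw [QuadraticMap.map_smul]; simp
  have hsymm : ∀ u v, B u v = B v u := fun u v => by
    simp [B, QuadraticMap.polar_comm]
  have hself : ∀ u, B u u = 2 * Q u := fun u => by
    simp [B, QuadraticMap.polar_self]
  have hpe : B p e = 1 := he
  obtain ⟨e1, hQe1, hpe1⟩ : ∃ e1, Q e1 = 0 ∧ B p e1 = 1 := by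
    refine ⟨e + (- Q e) • p, ?_, ?_⟩
    · rw [hB, hs, hp, map_smul, hsymm e p, hpe]; simp
    · rw [map_add, map_smul, hself, hp, hpe]; simp
  let φ : (Fin 4 → F) →ₗ[F] F × F := (B p).prod (B e1)
  have hφ : ∀ v, φ v = (B p v, B e1 v) := fun v => rfl
  have hsurj : Function.Surjective φ := by
    rintro ⟨x, y⟩
    refine ⟨x • e1 + y • p, ?_⟩
    rw [hφ]
    simp only [map_add, map_smul, hpe1, hself, hp, hQe1, hsymm e1 p]
    simp
  have hker : Module.finrank F (LinearMap.ker φ) = 2 := by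
    have := LinearMap.finrank_range_add_finrank_ker φ
    rw [LinearMap.range_eq_top.mpr hsurj, finrank_top] at this
    simp at this
    omega
  let bs := Module.finBasisOfFinrankEq F (LinearMap.ker φ) hker
  obtain ⟨w2, hw2⟩ : ∃ w : Fin 4 → F, w = bs 0 := ⟨_, rfl⟩
  obtain ⟨w3, hw3⟩ : ∃ w : Fin 4 → F, w = bs 1 := ⟨_, rfl⟩
  have hk : ∀ w ∈ LinearMap.ker φ, B p w = 0 ∧ B e1 w = 0 := by
    intro w hw
    have : φ w = 0 := hw
    rw [hφ] at this
    simpa using this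
  obtain ⟨hp2, he2⟩ := hk w2 (by rw [hw2]; exact (bs 0).2)
  obtain ⟨hp3, he3⟩ := hk w3 (by rw [hw3]; exact (bs 1).2)
  have hli : ∀ z t : F, z • w2 + t • w3 = 0 → z = 0 ∧ t = 0 := by
    intro z t h
    have h2 := Fintype.linearIndependent_iff.mp bs.linearIndependent ![z, t] (by
      apply Subtype.ext
      simpa [Fin.sum_univ_two, ← hw2, ← hw3] using h)
    exact ⟨h2 0, h2 1⟩
  let M : Matrix (Fin 4) (Fin 4) F := (Matrix.of ![p, e1, w2, w3]).transpose
  have hM : ∀ v, M.mulVec v = v 0 • p + v 1 • e1 + (v 2 • w2 + v 3 • w3) := by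
    intro v
    ext i
    simp [M, Matrix.mulVec, dotProduct, Fin.sum_univ_four, mul_comm]
    ring
  have hQM : ∀ v : Fin 4 → F, Q (M.mulVec v) =
      v 0 * v 1 + Q w2 * v 2 ^ 2 + B w2 w3 * v 2 * v 3 + Q w3 * v 3 ^ 2 := by
    intro v
    rw [hM, hB, hB, hB, hs, hs, hs, hs, hp, hQe1]
    simp only [map_add, map_smul, LinearMap.add_apply, LinearMap.smul_apply, hpe1, hp2, hp3, he2, he3, smul_eq_mul]
    ring
  have hQ2 : ∀ z t : F, Q (z • w2 + t • w3) = Q w2 * z ^ 2 + B w2 w3 * z * t + Q w3 * t ^ 2 := by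
    intro z t
    rw [hB, hs, hs]
    simp only [map_smul, LinearMap.smul_apply, smul_eq_mul]
    ring
  have hpw : ∀ z t : F, B p (z • w2 + t • w3) = 0 := by
    intro z t; simp [hp2, hp3]
  refine ⟨M, Q w2, B w2 w3, Q w3, ?_, ?_, ?_, hQM⟩
  · rw [← Matrix.mulVec_injective_iff_isUnit]
    rw [← Matrix.coe_mulVecLin, injective_iff_map_eq_zero]
    intro v hv
    rw [Matrix.mulVecLin_apply, hM] at hv
    have h1 := congrArg (B p) hv
    have h0 := congrArg (B e1) hv
    simp [hself, hp, hpe1, hp2, hp3] at h1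
    simp [hself, hQe1, hsymm e1 p, hpe1, he2, he3] at h0
    rw [h0, h1] at hv
    obtain ⟨h2, h3⟩ := hli (v 2) (v 3) (by simpa using hv)
    ext i
    fin_cases i
    · exact h0
    · exact h1
    · exact h2
    · exact h3
  · ext i; simp [M, Matrix.col]
  · intro z t hzt
    by_contra hne
    apply hline
    refine ⟨p, z • w2 + t • w3, ?_, ?_⟩
    · rw [LinearIndependent.pair_iff]
      intro x y hxy
      have h1 := congrArg (B e1) hxy
      simp [hsymm e1 p, hpe1, he2, he3] at h1
      refine ⟨h1, ?_⟩
      by_contra hy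
      apply hne
      apply hli
      rw [h1] at hxy
      rw [zero_smul, zero_add] at hxy
      exact (smul_eq_zero.mp hxy).resolve_left hy
    · intro x y
      rw [hB, hs, hs, hp, hQ2, hzt, map_smul, map_smul, LinearMap.smul_apply, hpw]
      simp

lemma exists_nonzero_zero {F : Type*} [Field F] [Fintype F] {P : MvPolynomial (Fin 4) F}
    (hP : P.IsHomogeneous 2) : ∃ p : Fin 4 → F, p ≠ 0 ∧ eval p P = 0 := by
  classical
  obtain ⟨ℓ, hℓ⟩ := CharP.exists F
  have hprime : ℓ.Prime := (CharP.char_is_prime_or_zero F ℓ).resolve_right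
    (CharP.char_ne_zero_of_finite F ℓ)
  have hd := char_dvd_card_solutions ℓ (f := P) (hP.totalDegree_le.trans_lt (by simp))
  have h0 : eval (0 : Fin 4 → F) P = 0 := by
    have := aeval_scale hP (0 : F) (0 : Fin 4 → F)
    simpa [coe_aeval_eq_eval] using this
  have : Nontrivial { x : Fin 4 → F // eval x P = 0 } := by
    rw [← Fintype.one_lt_card_iff_nontrivial]
    have : Nonempty { x : Fin 4 → F // eval x P = 0 } := ⟨⟨0, h0⟩⟩
    exact hprime.one_lt.trans_le (Nat.le_of_dvd Fintype.card_pos hd)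
  obtain ⟨⟨p, hp⟩, hne⟩ := exists_ne (⟨0, h0⟩ : { x : Fin 4 → F // eval x P = 0 })
  exact ⟨p, fun h => hne (Subtype.ext h), hp⟩

lemma normal_form {F : Type} [Field F] [Fintype F] (hq5 : 5 ≤ Fintype.card F)
    {P : MvPolynomial (Fin 4) F}
    (hX : IsEllipticQuadric F P) (p : Fin 4 → F) (hp0 : p ≠ 0) (hp : eval p P = 0) :
    ∃ (M : Matrix (Fin 4) (Fin 4) F) (a b c : F), IsUnit M ∧ M.col 0 = p ∧
      (∀ z t : F, a * z ^ 2 + b * z * t + c * t ^ 2 = 0 → z = 0 ∧ t = 0) ∧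
      (∀ v, eval (M.mulVec v) P = v 0 * v 1 + a * v 2 ^ 2 + b * v 2 * v 3 + c * v 3 ^ 2) ∧
      bind₁ M.toMvPolynomial P = X 0 * X 1 + C a * X 2 ^ 2 + C b * X 2 * X 3 + C c * X 3 ^ 2 := by
  obtain ⟨-, hhom, hsm, hline⟩ := hX
  obtain ⟨A, hA⟩ := exists_matrix_of_quadratic hhom
  let Q : QuadraticForm F (Fin 4 → F) := LinearMap.BilinMap.toQuadraticMap (Matrix.toLinearMap₂' F A)
  have hQ : ∀ v, eval v P = Q v := by
    intro v
    simp only [Q, LinearMap.BilinMap.toQuadraticMap_apply, Matrix.toLinearMap₂'_apply]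
    simp [hA]
    refine Finset.sum_congr rfl fun i _ => Finset.sum_congr rfl fun j _ => ?_
    ring
  obtain ⟨k, hk⟩ : ∃ k, eval p (pderiv k P) ≠ 0 := by
    obtain ⟨k, hk⟩ := hsm (algebraMap F _ ∘ p) (by
      intro h
      apply hp0
      funext i
      exact (algebraMap F (AlgebraicClosure F)).injective (by simpa using congrFun h i)) (by
      rw [aeval_algebraMap_apply, aeval_eq_eval_self, hp, map_zero])
    refine ⟨k, fun h => hk ?_⟩
    rw [aeval_algebraMap_apply, aeval_eq_eval_self, h, map_zero]
  have hpol : QuadraticMap.polar Q p (Pi.single k 1) = eval p (pderiv k P) := by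
    rw [QuadraticMap.polar, ← hQ, ← hQ, ← hQ, hA]
    fin_cases k <;> simp [Fin.sum_univ_four, pderiv_X] <;> ring
  obtain ⟨M, a, b, c, hM, hcol, hani, hval⟩ := normal_basis Q p
    ((eval p (pderiv k P))⁻¹ • Pi.single k 1) (by rw [← hQ]; exact hp)
    (by rw [QuadraticMap.polar_smul_right, hpol]; exact inv_mul_cancel₀ hk)
    (by simpa only [← hQ] using hline)
  refine ⟨M, a, b, c, hM, hcol, hani, fun v => by rw [hQ, hval], ?_⟩
  have hcard : ((2 : ℕ) : Cardinal) ≤ Cardinal.mk F := by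
    rw [Cardinal.mk_fintype]; exact_mod_cast (by omega)
  refine IsHomogeneous.funext_of_le_card (n := 2) ?_ ?_ ?_ hcard
  · have := hhom.aeval M.toMvPolynomial M.toMvPolynomial_isHomogeneous
    simpa using this
  · refine ((IsHomogeneous.add ?_ ?_).add ?_).add ?_
    · exact (isHomogeneous_X _ _).mul (isHomogeneous_X _ _)
    · exact isHomogeneous_C_mul_X_pow _ _ _
    · exact (isHomogeneous_C_mul_X _ _).mul (isHomogeneous_X _ _)
    · exact isHomogeneous_C_mul_X_pow _ _ _
  · intro v
    rw [eval_bind_matrix, hQ, hval]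
    simp

/-- For `q ≥ 5`, a cubic section of an elliptic quadric has at most
`max(3q + 3, min(4q, q + 1 + 4⌊2√q⌋))` rational points.  Here `⌊2√q⌋ = Nat.sqrt (4q)`. -/
theorem stmt_6 (q : ℕ) (hq : IsPrimePow q) (hq5 : 5 ≤ q)
    (F : Type) [Field F] [Fintype F] (hF : Fintype.card F = q)
    (Fp : MvPolynomial (Fin 4) F) (hX : IsEllipticQuadric F Fp)
    (G : MvPolynomial (Fin 4) F) (hG : G.IsHomogeneous 3) (hGF : ¬ Fp ∣ G) :
    {x : Projectivization F (Fin 4 → F) |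
      MvPolynomial.eval x.rep Fp = 0 ∧ MvPolynomial.eval x.rep G = 0}.ncard
        ≤ max (3 * q + 3) (min (4 * q) (q + 1 + 4 * Nat.sqrt (4 * q))) := by
  classical
  refine le_trans ?_ (le_max_left _ _)
  subst hF
  have hhom := hX.2.1
  have hG0 : eval (0 : Fin 4 → F) G = 0 := by
    have := aeval_scale hG (0 : F) (0 : Fin 4 → F)
    simpa [aeval_eq_eval_self] using this
  have key : ∀ p : Fin 4 → F, p ≠ 0 → eval p Fp = 0 →
      ∃ (M N : Matrix (Fin 4) (Fin 4) F) (a b c : F), M * N = 1 ∧ M.col 0 = p ∧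
      (∀ z t : F, a * z ^ 2 + b * z * t + c * t ^ 2 = 0 → z = 0 ∧ t = 0) ∧
      (∀ v, eval (M.mulVec v) Fp = v 0 * v 1 + a * v 2 ^ 2 + b * v 2 * v 3 + c * v 3 ^ 2) ∧
      {w : F × F | eval (M.mulVec ![-(a * w.1 ^ 2 + b * w.1 * w.2 + c * w.2 ^ 2), 1, w.1, w.2]) G
        = 0}.ncard ≤ 3 * Fintype.card F + 3 := by
    intro p hp0 hp
    obtain ⟨M, a, b, c, hM, hcol, hani, hval, hbind⟩ := normal_form hq5 hX p hp0 hp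
    obtain ⟨N, hMN, -⟩ := isUnit_iff_exists.mp hM
    refine ⟨M, N, a, b, c, hMN, hcol, hani, hval, ?_⟩
    have hG' : (bind₁ M.toMvPolynomial G).IsHomogeneous 3 := by
      have := hG.aeval M.toMvPolynomial M.toMvPolynomial_isHomogeneous
      simpa using this
    have hcount := core_count (AlgebraicClosure F) hq5 a b c hani hG' (by
      rw [← hbind]
      intro hdvd
      apply hGF
      have := map_dvd (bind₁ N.toMvPolynomial) hdvd
      rwa [bind_matrix_inv M N hMN, bind_matrix_inv M N hMN] at this)
    simpa only [eval_bind_matrix] using hcount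
  by_cases hall : ∀ p, eval p Fp = 0 → eval p G = 0
  · exfalso
    obtain ⟨p, hp0, hp⟩ := exists_nonzero_zero hhom
    obtain ⟨M, N, a, b, c, hMN, hcol, hani, hval, hcount⟩ := key p hp0 hp
    have huniv : {w : F × F | eval (M.mulVec
        ![-(a * w.1 ^ 2 + b * w.1 * w.2 + c * w.2 ^ 2), 1, w.1, w.2]) G = 0} = Set.univ := by
      apply Set.eq_univ_of_forall
      rintro ⟨z, t⟩
      apply hall
      rw [hval]
      simp
      ring
    rw [huniv, Set.ncard_univ, Nat.card_eq_fintype_card, Fintype.card_prod] at hcount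
    nlinarith
  · push Not at hall
    obtain ⟨p, hp, hpG⟩ := hall
    have hp0 : p ≠ 0 := by
      rintro rfl
      exact hpG hG0
    obtain ⟨M, N, a, b, c, hMN, hcol, hani, hval, hcount⟩ := key p hp0 hp
    refine le_trans ?_ hcount
    -- coordinates of a point of the section
    have hcoord : ∀ x : Projectivization F (Fin 4 → F), eval x.rep Fp = 0 → eval x.rep G = 0 →
        (N.mulVec x.rep) 1 ≠ 0 ∧ x.rep = (N.mulVec x.rep) 1 • M.mulVec
          ![-(a * ((N.mulVec x.rep) 2 / (N.mulVec x.rep) 1) ^ 2 +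
              b * ((N.mulVec x.rep) 2 / (N.mulVec x.rep) 1) *
                ((N.mulVec x.rep) 3 / (N.mulVec x.rep) 1) +
              c * ((N.mulVec x.rep) 3 / (N.mulVec x.rep) 1) ^ 2), 1,
            (N.mulVec x.rep) 2 / (N.mulVec x.rep) 1, (N.mulVec x.rep) 3 / (N.mulVec x.rep) 1] := by
      intro x hxF hxG
      obtain ⟨v, hv⟩ : ∃ v, v = N.mulVec x.rep := ⟨_, rfl⟩
      have hx : x.rep = M.mulVec v := by
        rw [hv, Matrix.mulVec_mulVec, hMN, Matrix.one_mulVec]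
      rw [← hv]
      have h1 : v 0 * v 1 + a * v 2 ^ 2 + b * v 2 * v 3 + c * v 3 ^ 2 = 0 := by
        rw [← hval, ← hx]; exact hxF
      have hv1 : v 1 ≠ 0 := by
        intro h0
        obtain ⟨h2, h3⟩ := hani (v 2) (v 3) (by rw [h0] at h1; linear_combination h1)
        have hx' : x.rep = fun i => v 0 * p i := by
          rw [hx, ← hcol]
          ext i
          simp [Matrix.mulVec, dotProduct, Fin.sum_univ_four, h0, h2, h3, Matrix.col, mul_comm]
        have h4 := hxG
        rw [hx', ← aeval_eq_eval_self, aeval_scale hG, aeval_eq_eval_self] at h4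
        have h5 : v 0 = 0 := by
          rcases mul_eq_zero.mp h4 with h | h
          · exact pow_eq_zero_iff (by norm_num) |>.mp h
          · exact absurd h hpG
        apply x.rep_nonzero
        rw [hx', h5]
        ext i
        simp
      refine ⟨hv1, ?_⟩
      rw [← Matrix.mulVec_smul]
      rw [hx]
      congr 1
      ext i
      fin_cases i
      · simp
        field_simp
        linear_combination h1
      · simp
      · simp; field_simp
      · simp; field_simp
    refine Set.ncard_le_ncard_of_injOn
      (fun x => ((N.mulVec x.rep) 2 / (N.mulVec x.rep) 1, (N.mulVec x.rep) 3 / (N.mulVec x.rep) 1))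
      ?_ ?_ (Set.toFinite _)
    · rintro x ⟨hxF, hxG⟩
      obtain ⟨h1, h2⟩ := hcoord x hxF hxG
      rw [h2, ← aeval_eq_eval_self] at hxG
      have h3 := (aeval_scale hG ((N.mulVec x.rep) 1) _).symm.trans hxG
      rw [aeval_eq_eval_self] at h3
      exact (mul_eq_zero.mp h3).resolve_left (pow_ne_zero _ h1)
    · rintro x ⟨hxF, hxG⟩ y ⟨hyF, hyG⟩ hxy
      obtain ⟨h1, h2⟩ := hcoord x hxF hxG
      obtain ⟨k1, k2⟩ := hcoord y hyF hyG
      simp only [Prod.mk.injEq] at hxy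
      obtain ⟨e2, e3⟩ := hxy
      rw [e2, e3] at h2
      rw [← x.mk_rep, ← y.mk_rep, Projectivization.mk_eq_mk_iff']
      have hgen : ∀ (r s : F) (u w m : Fin 4 → F), r ≠ 0 → u = s • m → w = r • m →
          (s / r) • w = u := by
        intro r s u w m hr hu hw
        rw [hu, hw, smul_smul, div_mul_cancel₀ _ hr]
      exact ⟨_, hgen _ _ _ _ _ k1 h2 k2⟩
end
end

section
/- Let q be a prime power and let P be a closed point of degree 3 of P² over F_q not contained in any F_q-rational line, given by a point p ∈ P²(F_{q³}) whose Frobenius orbit {p, φ(p), φ²(p)} has exactly 3 elements, these three points being non-collinear. Then for every nonzero homogeneous polynomial f ∈ F_q[x,y,z] of degree 3 vanishing at p, the number of points [a:b:c] ∈ P²(F_q) with f(a,b,c) = 0 is at most 2q + 2. -/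
open MvPolynomial

noncomputable section

lemma binForm {F : Type} [Field F] {d : ℕ} (f : MvPolynomial (Fin 3) F) (hf : f.IsHomogeneous d)
    (a u : Fin 3 → F) : ∃ c : ℕ → F, ∀ (A : Type) [CommRing A] [Algebra F A] (S T : A),
      aeval (fun i => algebraMap F A (a i) * S + algebraMap F A (u i) * T) f =
        ∑ k ∈ Finset.range (d + 1), algebraMap F A (c k) * S ^ k * T ^ (d - k) := by
  set B : MvPolynomial (Fin 2) F := aeval (fun i => C (a i) * X 0 + C (u i) * X 1) f with hB
  have hBh : B.IsHomogeneous d := by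
    have := hf.aeval (fun i => (C (a i) * X 0 + C (u i) * X 1 : MvPolynomial (Fin 2) F)) (n := 1)
      (fun i => (isHomogeneous_C_mul_X _ _).add (isHomogeneous_C_mul_X _ _))
    rw [one_mul] at this
    exact this
  let m : ℕ → (Fin 2 →₀ ℕ) := fun k => Finsupp.single 0 k + Finsupp.single 1 (d - k)
  have hsum : B = ∑ k ∈ Finset.range (d + 1), monomial (m k) (coeff (m k) B) := by
    ext s
    rw [coeff_sum]
    simp only [coeff_monomial]
    by_cases hs : s.degree = d
    · have hs' : s 0 + s 1 = d := by
        rw [← hs, Finsupp.degree_eq_sum, Fin.sum_univ_two]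
      have hms : m (s 0) = s := by
        ext i
        fin_cases i
        · simp [m]
        · simp [m]; omega
      rw [Finset.sum_eq_single (s 0)]
      · rw [if_pos hms, hms]
      · intro k _ hk
        rw [if_neg]
        intro h
        apply hk
        rw [← h]
        simp [m]
      · intro h
        simp at h
        omega
    · rw [hBh.coeff_eq_zero hs]
      symm
      apply Finset.sum_eq_zero
      intro k hk
      simp at hk
      rw [if_neg]
      rintro rfl
      apply hs
      rw [Finsupp.degree_eq_sum, Fin.sum_univ_two]
      simp [m]
      omega
  refine ⟨fun k => coeff (m k) B, fun A _ _ S T => ?_⟩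
  have h1 : aeval (fun i => algebraMap F A (a i) * S + algebraMap F A (u i) * T) f
      = aeval ![S, T] B := by
    rw [hB, ← AlgHom.comp_apply]
    congr 1
    ext i
    simp
  rw [h1]
  conv_lhs => rw [hsum]
  rw [map_sum]
  apply Finset.sum_congr rfl
  intro k _
  rw [aeval_monomial, Finsupp.prod_fintype _ _ (by simp), Fin.prod_univ_two]
  simp [m, mul_assoc]

lemma linCoeff {F : Type} [Field F] (f : MvPolynomial (Fin 3) F) (a : Fin 3 → F) :
    ∃ L : (Fin 3 → F) →ₗ[F] F, ∀ u : Fin 3 → F,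
      (aeval (fun i => Polynomial.C (a i) * 1 + Polynomial.C (u i) * Polynomial.X) f).coeff 1
        = L u ∧
      (aeval (fun i => Polynomial.C (a i) * 1 + Polynomial.C (u i) * Polynomial.X) f).coeff 0
        = eval a f := by
  induction f using MvPolynomial.induction_on with
  | C r => exact ⟨0, fun u => by simp [algHom_C, Polynomial.algebraMap_eq, Polynomial.coeff_C]⟩
  | add p q hp hq =>
    obtain ⟨L, hL⟩ := hp
    obtain ⟨M, hM⟩ := hq
    exact ⟨L + M, fun u => by
      constructor
      · rw [map_add, Polynomial.coeff_add, (hL u).1, (hM u).1]; rfl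
      · rw [map_add, Polynomial.coeff_add, (hL u).2, (hM u).2, map_add]⟩
  | mul_X p n hp =>
    obtain ⟨L, hL⟩ := hp
    refine ⟨a n • L + eval a p • LinearMap.proj n, fun u => ?_⟩
    have h1 := (hL u).1
    have h2 := (hL u).2
    rw [map_mul, aeval_X, mul_add, ← mul_assoc]
    constructor
    · rw [Polynomial.coeff_add, ← mul_assoc, Polynomial.coeff_mul_X, mul_one,
        Polynomial.coeff_mul_C, Polynomial.coeff_mul_C, h1, h2]
      simp [mul_comm]
    · rw [Polynomial.coeff_add, ← mul_assoc, Polynomial.mul_coeff_zero _ Polynomial.X, mul_one,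
        Polynomial.coeff_mul_C, h2]
      simp

/-- number of zeros on a line through `a`. -/
lemma lineRoots {F : Type} [Field F] [Fintype F] [DecidableEq F] {d : ℕ} {c : ℕ → F} {m : ℕ}
    (hm : ∀ k, k ≤ d → m < k → c k = 0) (hne : ∃ k ≤ d, c k ≠ 0) (p : F → F)
    (hp : ∀ t, p t = ∑ k ∈ Finset.range (d + 1), c k * t ^ k) :
    (Finset.univ.filter (fun t : F => p t = 0)).card ≤ m := by
  classical
  let g : Polynomial F := ∑ k ∈ Finset.range (d + 1), Polynomial.C (c k) * Polynomial.X ^ k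
  have hg : ∀ k, g.coeff k = if k ≤ d then c k else 0 := by
    intro k
    simp [g, Polynomial.finsetSum_coeff, Polynomial.coeff_C_mul, Polynomial.coeff_X_pow]
  have hg0 : g ≠ 0 := by
    obtain ⟨k, hk, hck⟩ := hne
    intro h
    have := hg k
    rw [h, if_pos hk] at this
    exact hck (by simpa using this.symm)
  have hdeg : g.natDegree ≤ m := by
    rw [Polynomial.natDegree_le_iff_coeff_eq_zero]
    intro k hk
    rw [hg]
    split_ifs with h
    · exact hm k h hk
    · rfl
  have hsub : (Finset.univ.filter (fun t : F => p t = 0)) ⊆ g.roots.toFinset := by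
    intro t ht
    simp only [Finset.mem_filter, Finset.mem_univ, true_and] at ht
    simp only [Multiset.mem_toFinset, Polynomial.mem_roots hg0, Polynomial.IsRoot.def]
    rw [← ht, hp]
    simp [g, Polynomial.eval_finsetSum]
  calc _ ≤ _ := Finset.card_le_card hsub
    _ ≤ _ := Multiset.toFinset_card_le _
    _ ≤ _ := Polynomial.card_roots' g
    _ ≤ m := hdeg

/-- a form vanishing on a line is divisible by a linear form. -/
lemma lineFactor {F : Type} [Field F] {d : ℕ} (f : MvPolynomial (Fin 3) F)
    (e : Module.Basis (Fin 3) F (Fin 3 → F)) (c : ℕ → F) (hc : ∀ k ≤ d, c k = 0)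
    (h : ∀ (A : Type) [CommRing A] [Algebra F A] (S T : A),
      aeval (fun i => algebraMap F A (e 0 i) * S + algebraMap F A (e 1 i) * T) f =
        ∑ k ∈ Finset.range (d + 1), algebraMap F A (c k) * S ^ k * T ^ (d - k)) :
    ∃ l : MvPolynomial (Fin 3) F, l.IsHomogeneous 1 ∧ l ∣ f := by
  let γ : Fin 3 → MvPolynomial (Fin 3) F := fun j => ∑ i, C (e.repr (Pi.single i 1) j) * X i
  have hγ : ∀ n, (X n : MvPolynomial (Fin 3) F) = ∑ j, C (e j n) * γ j := by
    intro n
    simp only [γ, Finset.mul_sum]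
    rw [Finset.sum_comm]
    have : ∀ i, ∑ j, C (e j n) * (C (e.repr (Pi.single i 1) j) * X i : MvPolynomial (Fin 3) F)
        = C ((Pi.single i 1 : Fin 3 → F) n) * X i := by
      intro i
      conv_rhs => rw [← e.sum_repr (Pi.single i 1)]
      simp only [Finset.sum_apply, Pi.smul_apply, smul_eq_mul, map_sum, map_mul, Finset.sum_mul]
      exact Finset.sum_congr rfl fun j _ => by ring
    rw [Finset.sum_congr rfl fun i _ => this i]
    simp [Pi.single_apply]
  refine ⟨γ 2, IsHomogeneous.sum _ _ _ fun i _ => isHomogeneous_C_mul_X _ _, ?_⟩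
  have h0 := h (MvPolynomial (Fin 3) F) (γ 0) (γ 1)
  rw [Finset.sum_eq_zero (fun k hk => by
    rw [hc k (by simp at hk; omega)]; simp)] at h0
  have key : ∀ g : MvPolynomial (Fin 3) F, γ 2 ∣ g - aeval (fun i => algebraMap F
      (MvPolynomial (Fin 3) F) (e 0 i) * γ 0 + algebraMap F _ (e 1 i) * γ 1) g := by
    intro g
    induction g using MvPolynomial.induction_on with
    | C r => simp [algebraMap_eq]
    | add p q hp hq =>
      rw [map_add, add_sub_add_comm]
      exact dvd_add hp hq
    | mul_X p n hp =>
      rw [map_mul, aeval_X]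
      set P := aeval (fun i => algebraMap F
        (MvPolynomial (Fin 3) F) (e 0 i) * γ 0 + algebraMap F _ (e 1 i) * γ 1) p
      have : p * X n - P * (algebraMap F (MvPolynomial (Fin 3) F) (e 0 n) * γ 0
          + algebraMap F _ (e 1 n) * γ 1) = (p - P) * X n + P * C (e 2 n) * γ 2 := by
        rw [hγ n, Fin.sum_univ_three, algebraMap_eq]
        ring
      rw [this]
      exact dvd_add (hp.mul_right _) (dvd_mul_left _ _)
  have := key f
  rwa [h0, sub_zero] at this

lemma homFactor {F : Type} [Field F] {d : ℕ} {f l : MvPolynomial (Fin 3) F}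
    (hf : f.IsHomogeneous (1 + d)) (hl : l.IsHomogeneous 1) (h : l ∣ f) :
    ∃ g : MvPolynomial (Fin 3) F, g.IsHomogeneous d ∧ f = l * g := by
  obtain ⟨g, rfl⟩ := h
  let _ : GradedAlgebra (homogeneousSubmodule (Fin 3) F) := MvPolynomial.gradedAlgebra
  refine ⟨DirectSum.decompose (homogeneousSubmodule (Fin 3) F) g d,
    (DirectSum.decompose (homogeneousSubmodule (Fin 3) F) g d).2, ?_⟩
  have := DirectSum.coe_decompose_mul_add_of_left_mem (homogeneousSubmodule (Fin 3) F)
    (i := 1) (j := d) (a := l) (b := g) hl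
  rw [DirectSum.decompose_of_mem_same _
    (show l * g ∈ homogeneousSubmodule (Fin 3) F (1 + d) from hf)] at this
  exact this

lemma linVal {F : Type} [Field F] {l : MvPolynomial (Fin 3) F} (hl : l.IsHomogeneous 1) :
    ∃ c : Fin 3 → F, l = ∑ i, C (c i) * X i := by
  have : l ∈ homogeneousSubmodule (Fin 3) F 1 := hl
  rw [homogeneousSubmodule_one_eq_span_X, Submodule.mem_span_range_iff_exists_fun] at this
  obtain ⟨c, hc⟩ := this
  exact ⟨c, by rw [← hc]; simp [smul_eq_C_mul]⟩

lemma evalSmul {F : Type} [Field F] {d : ℕ} {f : MvPolynomial (Fin 3) F} (hf : f.IsHomogeneous d)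
    (w : Fin 3 → F) (hw : eval w f = 0) (r : F) : eval (r • w) f = 0 := by
  obtain ⟨c, hc⟩ := binForm f hf w 0
  have h1 := hc F r 0
  have h2 := hc F 1 0
  have e1 : (fun i => algebraMap F F (w i) * r + algebraMap F F ((0 : Fin 3 → F) i) * 0) = r • w := by
    ext i; simp [mul_comm]
  have e2 : (fun i => algebraMap F F (w i) * 1 + algebraMap F F ((0 : Fin 3 → F) i) * 0) = w := by
    ext i; simp
  rw [e1, Finset.sum_range_succ, Finset.sum_eq_zero] at h1
  · rw [e2, Finset.sum_range_succ, Finset.sum_eq_zero] at h2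
    · simp [aeval_eq_eval, hw] at h1 h2
      rw [← h2] at h1
      simpa using h1
    · intro k hk
      simp at hk
      rw [zero_pow (by omega)]; simp
  · intro k hk
    simp at hk
    rw [zero_pow (by omega)]; simp

lemma existsBasis {F : Type} [Field F] (a : Fin 3 → F) (ha : a ≠ 0) (L : (Fin 3 → F) →ₗ[F] F) :
    ∃ b c : Fin 3 → F, L b = 0 ∧ LinearIndependent F ![a, b, c] := by
  have hker : 2 ≤ Module.finrank F (LinearMap.ker L) := by
    have h1 := L.finrank_range_add_finrank_ker
    have h2 : Module.finrank F (LinearMap.range L) ≤ 1 := by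
      simpa using Submodule.finrank_le (LinearMap.range L)
    simp at h1
    omega
  have : ∃ b ∈ LinearMap.ker L, b ∉ Submodule.span F {a} := by
    by_contra! hcon
    have := Submodule.finrank_mono (show LinearMap.ker L ≤ Submodule.span F {a} from hcon)
    rw [finrank_span_singleton ha] at this
    omega
  obtain ⟨b, hb, hba⟩ := this
  have hab : LinearIndependent F ![a, b] := by
    rw [LinearIndependent.pair_iff' ha]
    intro r hr
    exact hba (hr ▸ Submodule.smul_mem _ _ (Submodule.mem_span_singleton_self a))
  obtain ⟨c, hc⟩ := exists_linearIndependent_snoc_of_lt_finrank hab (by simp)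
  refine ⟨b, c, hb, ?_⟩
  have hs : (Fin.snoc ![a, b] c : Fin 3 → Fin 3 → F) = ![a, b, c] := by
    ext i j
    fin_cases i <;> rfl
  rw [← hs]
  exact hc

lemma mainCount {F : Type} [Field F] [Fintype F] {n : ℕ} (f : MvPolynomial (Fin 3) F)
    (hf : f.IsHomogeneous (n + 2))
    (hnl : ∀ l : MvPolynomial (Fin 3) F, l.IsHomogeneous 1 → ¬ l ∣ f) :
    {x : Projectivization F (Fin 3 → F) | eval x.rep f = 0}.ncard
      ≤ (n + 1) * (Fintype.card F + 1) := by
  classical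
  by_cases hex : ∃ x : Projectivization F (Fin 3 → F), eval x.rep f = 0
  swap
  · push Not at hex
    have : {x : Projectivization F (Fin 3 → F) | eval x.rep f = 0} = ∅ := by
      ext x; simpa using hex x
    simp [this]
  obtain ⟨x₀, hx₀⟩ := hex
  set a := x₀.rep with ha
  have ha0 : a ≠ 0 := x₀.rep_nonzero
  obtain ⟨L, hL⟩ := linCoeff f a
  obtain ⟨b, c, hb, hli⟩ := existsBasis a ha0 L
  -- the bound on each line
  have line : ∀ u w : Fin 3 → F, LinearIndependent F ![a, u, w] → ∀ m,
      (m = n + 1 ∨ (m = n ∧ L u = 0)) →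
      (Finset.univ.filter (fun t : F => eval (t • a + u) f = 0)).card ≤ m := by
    intro u w hi m hm
    obtain ⟨k, hk⟩ := binForm f hf a u
    have hpoly := hk (Polynomial F) 1 Polynomial.X
    have hL' := hL u
    have ecoef : ∀ j ≤ n + 2, (∑ k_1 ∈ Finset.range (n + 2 + 1), (algebraMap F (Polynomial F)) (k k_1)
        * 1 ^ k_1 * Polynomial.X ^ (n + 2 - k_1)).coeff (n + 2 - j) = k j := by
      intro j hj
      simp only [one_pow, mul_one, Polynomial.finsetSum_coeff, Polynomial.algebraMap_eq,
        Polynomial.coeff_C_mul, Polynomial.coeff_X_pow]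
      rw [Finset.sum_eq_single j]
      · simp
      · intro i hi hij
        simp at hi
        rw [if_neg (by omega), mul_zero]
      · intro h; simp at h; omega
    rw [Polynomial.algebraMap_eq] at hpoly ecoef
    rw [hpoly] at hL'
    have ktop : k (n + 2) = 0 := by
      rw [← ecoef (n + 2) le_rfl, Nat.sub_self, hL'.2, hx₀]
    have ksub : k (n + 1) = L u := by
      rw [← ecoef (n + 1) (by omega), ← hL'.1]
      congr 1
      omega
    refine lineRoots (d := n + 2) (c := k) (m := m) ?_ ?_ _ ?_
    · intro j hj hmj
      rcases hm with rfl | ⟨rfl, h0⟩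
      · have : j = n + 2 := by omega
        rw [this, ktop]
      · have : j = m + 2 ∨ j = m + 1 := by omega
        rcases this with rfl | rfl
        · exact ktop
        · rw [ksub, h0]
    · by_contra! hcon
      let e := basisOfLinearIndependentOfCardEqFinrank hi (by simp)
      have he : (e : Fin 3 → Fin 3 → F) = ![a, u, w] :=
        coe_basisOfLinearIndependentOfCardEqFinrank _ _
      obtain ⟨l, hl1, hl2⟩ := lineFactor (d := n + 2) f e k hcon (by
        intro A _ _ S T
        rw [he]
        exact hk A S T)
      exact hnl l hl1 hl2
    · intro t
      have := hk F t 1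
      simp only [one_pow, mul_one, Algebra.algebraMap_self, RingHom.id_apply] at this
      rw [← this, aeval_eq_eval]
      congr 2
      ext i
      simp [mul_comm]
  let toP : (Fin 3 → F) → Projectivization F (Fin 3 → F) := fun w =>
    if h : w ≠ 0 then Projectivization.mk F w h else x₀
  have htoP : ∀ (x : Projectivization F (Fin 3 → F)) (r : F), r ≠ 0 → toP (r • x.rep) = x := by
    intro x r hr
    have h0 : r • x.rep ≠ 0 := smul_ne_zero hr x.rep_nonzero
    simp only [toP, dif_pos h0]
    conv_rhs => rw [← x.mk_rep]
    rw [Projectivization.mk_eq_mk_iff']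
    exact ⟨r, rfl⟩
  let S1 : Finset (Fin 3 → F) :=
    (Finset.univ.filter (fun t : F => eval (t • a + b) f = 0)).image (fun t => t • a + b)
  let S2 : F → Finset (Fin 3 → F) := fun s =>
    (Finset.univ.filter (fun t : F => eval (t • a + (s • b + c)) f = 0)).image
      (fun t => t • a + (s • b + c))
  let S : Finset (Fin 3 → F) := ({a} ∪ S1) ∪ Finset.univ.biUnion S2
  have hcover : {x : Projectivization F (Fin 3 → F) | eval x.rep f = 0} ⊆ (S.image toP : Finset _) := by
    intro x hx
    simp only [Set.mem_ofPred_eq] at hx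
    rw [Finset.mem_coe, Finset.mem_image]
    let e := basisOfLinearIndependentOfCardEqFinrank hli (by simp)
    have he : (e : Fin 3 → Fin 3 → F) = ![a, b, c] :=
      coe_basisOfLinearIndependentOfCardEqFinrank _ _
    have hrep := e.sum_repr x.rep
    rw [Fin.sum_univ_three, he] at hrep
    simp only [Matrix.cons_val_zero, Matrix.cons_val_one, Matrix.cons_val] at hrep
    set α := e.repr x.rep 0
    set β := e.repr x.rep 1
    set γ := e.repr x.rep 2
    by_cases hγ : γ = 0
    · by_cases hβ : β = 0
      · rw [hγ, hβ, zero_smul, zero_smul, add_zero, add_zero] at hrep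
        have hα : α ≠ 0 := by
          intro h
          rw [h, zero_smul] at hrep
          exact x.rep_nonzero hrep.symm
        refine ⟨a, by simp [S], ?_⟩
        rw [← htoP x α⁻¹ (inv_ne_zero hα), ← hrep, smul_smul, inv_mul_cancel₀ hα, one_smul]
      · have hw : β⁻¹ • x.rep = (β⁻¹ * α) • a + b := by
          rw [← hrep, hγ, zero_smul, add_zero, smul_add, smul_smul, smul_smul,
            inv_mul_cancel₀ hβ, one_smul]
        have hz := evalSmul hf x.rep hx β⁻¹
        refine ⟨β⁻¹ • x.rep, ?_, htoP x _ (inv_ne_zero hβ)⟩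
        rw [hw] at hz ⊢
        apply Finset.mem_union_left
        apply Finset.mem_union_right
        exact Finset.mem_image.2 ⟨β⁻¹ * α, by simpa using hz, rfl⟩
    · have hw : γ⁻¹ • x.rep = (γ⁻¹ * α) • a + ((γ⁻¹ * β) • b + c) := by
        rw [← hrep, smul_add, smul_add, smul_smul, smul_smul, smul_smul,
            inv_mul_cancel₀ hγ, one_smul, add_assoc]
      have hz := evalSmul hf x.rep hx γ⁻¹
      refine ⟨γ⁻¹ • x.rep, ?_, htoP x _ (inv_ne_zero hγ)⟩
      rw [hw] at hz ⊢
      apply Finset.mem_union_right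
      rw [Finset.mem_biUnion]
      exact ⟨γ⁻¹ * β, Finset.mem_univ _, Finset.mem_image.2 ⟨γ⁻¹ * α, by simpa using hz, rfl⟩⟩
  have hS1 : S1.card ≤ n := Finset.card_image_le.trans (line b c hli n (Or.inr ⟨rfl, hb⟩))
  have hS2 : ∀ s, (S2 s).card ≤ n + 1 := by
    intro s
    refine Finset.card_image_le.trans (line (s • b + c) b ?_ (n + 1) (Or.inl rfl))
    rw [Fintype.linearIndependent_iff] at hli ⊢
    intro g hg
    rw [Fin.sum_univ_three] at hg
    simp only [Matrix.cons_val_zero, Matrix.cons_val_one, Matrix.cons_val] at hg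
    have h3 := hli ![g 0, g 1 * s + g 2, g 1] (by
      rw [Fin.sum_univ_three]
      simp only [Matrix.cons_val_zero, Matrix.cons_val_one, Matrix.cons_val]
      rw [← hg]
      module)
    have e0 := h3 0
    have e1 := h3 1
    have e2 := h3 2
    simp only [Matrix.cons_val_zero, Matrix.cons_val_one, Matrix.cons_val] at e0 e1 e2
    rw [e2, zero_mul, zero_add] at e1
    intro i
    fin_cases i
    · exact e0
    · exact e2
    · exact e1
  have hS : S.card ≤ 1 + n + Fintype.card F * (n + 1) := by
    refine (Finset.card_union_le _ _).trans (add_le_add ?_ ?_)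
    · refine (Finset.card_union_le _ _).trans (add_le_add (by simp) hS1)
    · refine Finset.card_biUnion_le.trans ?_
      refine (Finset.sum_le_card_nsmul _ _ (n + 1) (fun s _ => hS2 s)).trans ?_
      simp
  calc _ ≤ ((S.image toP : Finset _) : Set (Projectivization F (Fin 3 → F))).ncard :=
        Set.ncard_le_ncard hcover (Finset.finite_toSet _)
    _ = (S.image toP).card := Set.ncard_coe_finset _
    _ ≤ S.card := Finset.card_image_le
    _ ≤ _ := hS
    _ = _ := by ring

lemma linCount {F : Type} [Field F] [Fintype F] (l : MvPolynomial (Fin 3) F)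
    (hl : l.IsHomogeneous 1) (h0 : l ≠ 0) :
    {x : Projectivization F (Fin 3 → F) | eval x.rep l = 0}.ncard ≤ Fintype.card F + 1 := by
  obtain ⟨c, rfl⟩ := linVal hl
  let L : (Fin 3 → F) →ₗ[F] F := ∑ i, c i • LinearMap.proj i
  have hLe : ∀ w, eval w (∑ i, C (c i) * X i : MvPolynomial (Fin 3) F) = L w := by
    intro w; simp [L]
  have hL0 : L ≠ 0 := by
    intro h
    apply h0
    have : ∀ i, c i = 0 := by
      intro i
      have := LinearMap.congr_fun h (Pi.single i 1)
      simpa [L, Pi.single_apply] using this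
    simp [this]
  have hk : Module.finrank F (LinearMap.ker L) = 2 := by
    have h1 := L.finrank_range_add_finrank_ker
    rw [LinearMap.range_eq_top.2 (LinearMap.surjective hL0)] at h1
    simp at h1
    omega
  have hcard := Projectivization.card_of_finrank_two F (LinearMap.ker L) hk
  have hinj : Function.Injective (LinearMap.ker L).subtype := Subtype.val_injective
  have : Finite (Projectivization F (LinearMap.ker L)) := by
    rw [Projectivization.finite_iff_of_finite]; infer_instance
  have hsub : {x : Projectivization F (Fin 3 → F) |
      eval x.rep (∑ i, C (c i) * X i : MvPolynomial (Fin 3) F) = 0} ⊆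
      Set.range (Projectivization.map (LinearMap.ker L).subtype hinj) := by
    intro x hx
    simp only [Set.mem_ofPred_eq] at hx
    rw [hLe] at hx
    refine ⟨Projectivization.mk F ⟨x.rep, hx⟩ (fun h => x.rep_nonzero (congrArg Subtype.val h)), ?_⟩
    rw [Projectivization.map_mk]
    exact x.mk_rep
  calc _ ≤ _ := Set.ncard_le_ncard hsub (Set.finite_range _)
    _ = Nat.card (Projectivization F (LinearMap.ker L)) := by
      rw [← Nat.card_coe_set_eq]
      exact Nat.card_range_of_injective (Projectivization.map_injective _ hinj)
    _ = _ := by rw [hcard, Nat.card_eq_fintype_card]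

lemma linNonvanish {q : ℕ} {F E : Type} [Field F] [Fintype F] [Field E] [Algebra F E]
    (hF : Fintype.card F = q) (v : Fin 3 → E)
    (hv : LinearIndependent E ![v, fun i => v i ^ q, fun i => v i ^ q ^ 2])
    (l : MvPolynomial (Fin 3) F) (hl : l.IsHomogeneous 1) (h : aeval v l = 0) : l = 0 := by
  obtain ⟨c, rfl⟩ := linVal hl
  let L : (Fin 3 → E) →ₗ[E] E := ∑ i, algebraMap F E (c i) • LinearMap.proj i
  have hLe : ∀ w, aeval w (∑ i, C (c i) * X i : MvPolynomial (Fin 3) F) = L w := by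
    intro w; simp [L, Algebra.smul_def]
  have frob : ∀ w : Fin 3 → E, L (fun i => w i ^ q) = (L w) ^ q := by
    intro w
    subst hF
    rw [← hLe, ← hLe]
    have := FiniteField.coe_frobeniusAlgHom F E
    change _ = FiniteField.frobeniusAlgHom F E _
    rw [← AlgHom.comp_apply, comp_aeval]
    rfl
  have hq : q ≠ 0 := hF ▸ Fintype.card_ne_zero
  have h0 : L v = 0 := by rw [← hLe, h]
  have h1 : L (fun i => v i ^ q) = 0 := by rw [frob, h0, zero_pow hq]
  have h2 : L (fun i => v i ^ q ^ 2) = 0 := by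
    have := frob (fun i => v i ^ q)
    rw [h1, zero_pow hq] at this
    rw [← this]
    congr 1
    ext i
    rw [← pow_mul, sq]
  let e := basisOfLinearIndependentOfCardEqFinrank hv (by simp)
  have hL0 : L = 0 := by
    apply e.ext
    intro i
    simp only [e, coe_basisOfLinearIndependentOfCardEqFinrank]
    fin_cases i
    · exact h0
    · exact h1
    · exact h2
  have : ∀ i, c i = 0 := by
    intro i
    have := LinearMap.congr_fun hL0 (Pi.single i 1)
    simpa [L, Pi.single_apply] using this
  simp [this]

/-- A plane cubic over `F_q` passing through a degree-3 closed point not on any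
`F_q`-rational line has at most `2q + 2` rational points. -/
theorem stmt_10 (q : ℕ) (hq : IsPrimePow q)
    (F E : Type) [Field F] [Fintype F] [Field E] [Fintype E] [Algebra F E]
    (hF : Fintype.card F = q) (hE : Fintype.card E = q ^ 3)
    -- `v` represents a degree-3 closed point of `P²`: its three Frobenius conjugates are
    -- pairwise distinct and non-collinear (equivalently, linearly independent).
    (v : Fin 3 → E)
    (hv : LinearIndependent E ![v, fun i => v i ^ q, fun i => v i ^ q ^ 2]) :
    ∀ f : MvPolynomial (Fin 3) F, f ≠ 0 → f.IsHomogeneous 3 →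
      MvPolynomial.aeval v f = 0 →
      {x : Projectivization F (Fin 3 → F) | MvPolynomial.eval x.rep f = 0}.ncard ≤ 2 * q + 2 := by
  intro f hf0 hf hfv
  have hlv := linNonvanish hF v hv
  by_cases hnl : ∀ l : MvPolynomial (Fin 3) F, l.IsHomogeneous 1 → ¬ l ∣ f
  · have := mainCount (n := 1) f hf hnl
    rw [hF] at this
    omega
  push Not at hnl
  obtain ⟨l, hl, hlf⟩ := hnl
  obtain ⟨g, hg, rfl⟩ := homFactor (d := 2) hf hl hlf
  have hl0 : l ≠ 0 := left_ne_zero_of_mul hf0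
  have hg0 : g ≠ 0 := right_ne_zero_of_mul hf0
  have hgv : aeval v g = 0 := by
    rw [map_mul] at hfv
    exact (mul_eq_zero.1 hfv).resolve_left fun h => hl0 (hlv l hl h)
  have h1 := linCount l hl hl0
  have h2 := mainCount (n := 0) g hg (by
    intro l' hl' hd
    obtain ⟨g', hg', rfl⟩ := homFactor (d := 1) hg hl' hd
    rw [map_mul] at hgv
    rcases mul_eq_zero.1 hgv with h | h
    · exact left_ne_zero_of_mul hg0 (hlv _ hl' h)
    · exact right_ne_zero_of_mul hg0 (hlv _ hg' h))
  have hset : {x : Projectivization F (Fin 3 → F) | eval x.rep (l * g) = 0} =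
      {x : Projectivization F (Fin 3 → F) | eval x.rep l = 0} ∪
      {x : Projectivization F (Fin 3 → F) | eval x.rep g = 0} := by
    ext x
    simp
  rw [hset]
  refine (Set.ncard_union_le _ _).trans ?_
  rw [hF] at h1 h2
  omega
end
end

section
/- Let q be a prime power and let P be a closed point of degree 3 of P² over F_q not contained in any F_q-rational line, given by a point p ∈ P²(F_{q³}) whose Frobenius orbit {p, φ(p), φ²(p)} has exactly 3 elements, these three points being non-collinear. Then there exists a nonzero homogeneous polynomial f ∈ F_q[x,y,z] of degree 3 vanishing at p such that the number of points [a:b:c] ∈ P²(F_q) with f(a,b,c) = 0 is exactly 2q + 2. -/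
open MvPolynomial

noncomputable section

lemma exists_irred_quad (F : Type) [Field F] [Fintype F] :
    ∃ a : F, ∀ t : F, t ^ 2 + t + a ≠ 0 := by
  have h : ¬ Function.Surjective (fun t : F => t ^ 2 + t) := by
    intro hs
    have hi := Finite.injective_iff_surjective.mpr hs
    have : (0 : F) = -1 := hi (by simp)
    simp at this
  simp only [Function.Surjective, not_forall, not_exists] at h
  obtain ⟨c, hc⟩ := h
  refine ⟨-c, fun t ht => hc t ?_⟩
  linear_combination ht

lemma indep_F (q : ℕ) 
    (F E : Type) [Field F] [Fintype F] [Field E] [Fintype E] [Algebra F E]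
    (hF : Fintype.card F = q) (v : Fin 3 → E)
    (hv : LinearIndependent E ![v, fun i => v i ^ q, fun i => v i ^ q ^ 2]) :
    LinearIndependent F v := by
  rw [Fintype.linearIndependent_iff]
  intro c hc
  have hf : ∀ k : ℕ, ∑ i, algebraMap F E (c i) * v i ^ q ^ k = 0 := by
    intro k
    have h1 : ((FiniteField.frobeniusAlgHom F E) ^ k) (∑ i, c i • v i) = 0 := by
      rw [hc, map_zero]
    have h2 : ∀ x : E, ((FiniteField.frobeniusAlgHom F E) ^ k) x = x ^ q ^ k := by
      intro x
      rw [AlgHom.coe_pow, FiniteField.coe_frobeniusAlgHom, pow_iterate, hF]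
    rw [map_sum] at h1
    rw [← h1]
    refine Finset.sum_congr rfl fun i _ => ?_
    rw [map_smul, h2, Algebra.smul_def]
  have hu : IsUnit (Matrix.of ![v, fun i => v i ^ q, fun i => v i ^ q ^ 2]) :=
    Matrix.linearIndependent_rows_iff_isUnit.mp hv
  have hz : (fun i => algebraMap F E (c i)) = 0 := by
    apply Matrix.mulVec_injective_of_isUnit hu
    ext k
    have h0 := hf 0
    have h1 := hf 1
    have h2 := hf 2
    fin_cases k <;> simp [Matrix.mulVec, dotProduct, Fin.sum_univ_three] at h0 h1 h2 ⊢ <;> grind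
  intro i
  have := congrFun hz i
  simpa using this

lemma exists_theta (q : ℕ) 
    (F E : Type) [Field F] [Fintype F] [Field E] [Fintype E] [Algebra F E]
    (h3 : Module.finrank F E = 3) :
    ∃ θ : E, LinearIndependent F (fun i : Fin 3 => θ ^ (i : ℕ)) := by
  obtain ⟨θ, hθ⟩ := Field.exists_primitive_element F E
  refine ⟨θ, ?_⟩
  have h := (Field.primitive_element_iff_minpoly_natDegree_eq F θ).mp hθ
  have hl := linearIndependent_pow (K := F) θ
  rw [h, h3] at hl
  exact hl

/-- representatives of the points of the cubic -/
def pts {F : Type} [Field F] (a : F) : Option F ⊕ Option F → (Fin 3 → F)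
  | .inl (some t) => ![1, t, t ^ 2]
  | .inl none => ![0, 0, 1]
  | .inr (some t) => ![1, t, -a - t]
  | .inr none => ![0, 1, -1]

lemma pts_ne {F : Type} [Field F] (a : F) (i) : pts a i ≠ 0 := by
  intro h
  have h0 := congrFun h 0
  have h1 := congrFun h 1
  have h2 := congrFun h 2
  rcases i with (_ | t) | (_ | t) <;> simp [pts] at h0 h1 h2

lemma pts_inj {F : Type} [Field F] (a : F) (ha : ∀ t : F, t ^ 2 + t + a ≠ 0) (i j) (c : F)
    (h : c • pts a i = pts a j) : i = j := by
  have h0 := congrFun h 0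
  have h1 := congrFun h 1
  have h2 := congrFun h 2
  rcases i with (_ | t) | (_ | t) <;> rcases j with (_ | s) | (_ | s) <;>
    simp [pts] at h0 h1 h2 ⊢ <;> grind

lemma pts_surj {F : Type} [Field F] (a : F) (y : Fin 3 → F) (hy : y ≠ 0) :
    (y 0 * y 2 - y 1 ^ 2) * (a * y 0 + y 1 + y 2) = 0 ↔ ∃ i, ∃ c : F, c • pts a i = y := by
  constructor
  · intro h
    have key : ∀ z : Fin 3 → F, z 0 = y 0 → z 1 = y 1 → z 2 = y 2 → z = y := by
      intro z h0 h1 h2; ext k; fin_cases k <;> assumption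
    rcases mul_eq_zero.mp h with h | h <;> by_cases h0 : y 0 = 0
    · refine ⟨.inl none, y 2, key _ ?_ ?_ ?_⟩ <;> simp [pts] <;> grind
    · refine ⟨.inl (some (y 1 / y 0)), y 0, key _ ?_ ?_ ?_⟩ <;> simp [pts] <;> field_simp <;> grind
    · refine ⟨.inr none, y 1, key _ ?_ ?_ ?_⟩ <;> simp [pts] <;> grind
    · refine ⟨.inr (some (y 1 / y 0)), y 0, key _ ?_ ?_ ?_⟩ <;> simp [pts] <;> field_simp <;> grind
  · rintro ⟨i, c, rfl⟩
    rcases i with (_ | t) | (_ | t) <;> simp [pts] <;> grind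

/-- The bound `2q + 2` of the previous statement is attained by some plane cubic over
`F_q` passing through the degree-3 closed point. -/
theorem stmt_11 (q : ℕ) (hq : IsPrimePow q)
    (F E : Type) [Field F] [Fintype F] [Field E] [Fintype E] [Algebra F E]
    (hF : Fintype.card F = q) (hE : Fintype.card E = q ^ 3)
    -- `v` represents a degree-3 closed point of `P²`: its three Frobenius conjugates are
    -- pairwise distinct and non-collinear (equivalently, linearly independent).
    (v : Fin 3 → E)
    (hv : LinearIndependent E ![v, fun i => v i ^ q, fun i => v i ^ q ^ 2]) :
    ∃ f : MvPolynomial (Fin 3) F, f ≠ 0 ∧ f.IsHomogeneous 3 ∧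
      MvPolynomial.aeval v f = 0 ∧
      {x : Projectivization F (Fin 3 → F) | MvPolynomial.eval x.rep f = 0}.ncard = 2 * q + 2 := by
  have hvF := indep_F q F E hF v hv
  have h3 : Module.finrank F E = 3 := by
    have h := Module.card_eq_pow_finrank (K := F) (V := E)
    rw [hE, hF] at h
    exact (Nat.pow_right_injective hq.two_le h).symm
  obtain ⟨θ, hθ⟩ := exists_theta q F E h3
  obtain ⟨a, ha⟩ := exists_irred_quad F
  let B := basisOfLinearIndependentOfCardEqFinrank hvF (by simp [h3])
  let T := basisOfLinearIndependentOfCardEqFinrank hθ (by simp [h3])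
  have hB : ∀ i, B i = v i := fun i => by simp [B]
  have hT : ∀ i, T i = θ ^ (i : ℕ) := fun i => by simp [T]
  let M : Matrix (Fin 3) (Fin 3) F := (B.toMatrix T).transpose
  have hM : IsUnit M := by
    rw [Matrix.isUnit_transpose]
    exact IsUnit.of_mul_eq_one _ (B.toMatrix_mul_toMatrix_flip T)
  let e : (Fin 3 → F) ≃ₗ[F] (Fin 3 → F) := LinearEquiv.ofBijective M.mulVecLin
    ⟨Matrix.mulVec_injective_of_isUnit hM, Matrix.mulVec_surjective_iff_isUnit.mpr hM⟩
  let L : Fin 3 → MvPolynomial (Fin 3) F := fun i => ∑ j, C (M i j) * X j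
  have hL1 : ∀ i, (L i).IsHomogeneous 1 := fun i =>
    IsHomogeneous.sum _ _ _ fun j _ => by
      simpa using (isHomogeneous_C (Fin 3) (M i j)).mul (isHomogeneous_X F j)
  have hLe : ∀ x i, eval x (L i) = e x i := by
    intro x i
    simp only [L, map_sum, map_mul, eval_C, eval_X]
    rfl
  have hLv : ∀ i, aeval v (L i) = θ ^ (i : ℕ) := by
    intro i
    rw [← hT i, ← B.sum_repr (T i)]
    simp [L, M, Module.Basis.toMatrix_apply, hB, Algebra.smul_def]
  let f : MvPolynomial (Fin 3) F := (L 0 * L 2 - L 1 ^ 2) * (C a * L 0 + L 1 + L 2)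
  have hfe : ∀ x, eval x f = (e x 0 * e x 2 - e x 1 ^ 2) * (a * e x 0 + e x 1 + e x 2) := by
    intro x
    simp [f, hLe]
  refine ⟨f, ?_, ?_, ?_, ?_⟩
  · intro h0
    have h := hfe (e.symm ![0, 1, 0])
    rw [h0] at h
    simp at h
  · have hc : (C a * L 0).IsHomogeneous 1 := by
      simpa using (isHomogeneous_C (Fin 3) a).mul (hL1 0)
    exact (((hL1 0).mul (hL1 2)).sub ((hL1 1).pow 2)).mul ((hc.add (hL1 1)).add (hL1 2))
  · simp [f, hLv]
  · have hne : ∀ i, e.symm (pts a i) ≠ 0 := fun i => by simpa using pts_ne a i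
    let g : Option F ⊕ Option F → Projectivization F (Fin 3 → F) :=
      fun i => Projectivization.mk F (e.symm (pts a i)) (hne i)
    have hg : Function.Injective g := by
      intro i j hij
      obtain ⟨c, hc⟩ := (Projectivization.mk_eq_mk_iff' F _ _ (hne i) (hne j)).mp hij
      rw [← map_smul] at hc
      exact (pts_inj a ha j i c (e.symm.injective hc)).symm
    have hr : {x : Projectivization F (Fin 3 → F) | MvPolynomial.eval x.rep f = 0}
        = Set.range g := by
      ext x
      rw [Set.mem_setOf_eq, hfe, pts_surj a _ (by simpa using x.rep_nonzero), Set.mem_range]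
      refine exists_congr fun i => ?_
      conv_rhs => rw [← x.mk_rep]
      rw [eq_comm (a := g i), Projectivization.mk_eq_mk_iff']
      refine exists_congr fun c => ?_
      rw [← map_smul, LinearEquiv.symm_apply_eq]
    rw [hr, ← Set.image_univ, Set.ncard_image_of_injective _ hg, Set.ncard_univ]
    simp [hF]
    ring
end
end

section
/- Let q be a prime power with q ≥ 4 and let P be a closed point of degree 3 of P² over F_q not contained in any F_q-rational line, given by a point p ∈ P²(F_{q³}) whose Frobenius orbit {p, φ(p), φ²(p)} has exactly 3 elements, these three points being non-collinear. Then there exists a nonzero homogeneous polynomial f ∈ F_q[x,y,z] of degree 4 vanishing at p such that the number of points [a:b:c] ∈ P²(F_q) with f(a,b,c) = 0 is exactly 3q + 2. -/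
open MvPolynomial

noncomputable section


lemma quad_aux (F : Type) [Field F] [Fintype F] (h4 : 4 ≤ Fintype.card F) :
    ∃ a c : F, a ≠ 0 ∧ a ≠ 1 ∧ (∀ t : F, t ^ 2 + t + c ≠ 0) ∧
      (∀ t : F, t ^ 2 + a * t + a ^ 2 * c ≠ 0) := by
  classical
  have hc : ∃ c : F, ∀ t : F, t ^ 2 + t + c ≠ 0 := by
    have hni : ¬ Function.Injective (fun t : F => t ^ 2 + t) := by
      intro h
      have := @h 0 (-1) (by simp)
      simp at this
    rw [Finite.injective_iff_surjective] at hni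
    simp only [Function.Surjective, not_forall, not_exists] at hni
    obtain ⟨c, hc⟩ := hni
    exact ⟨-c, fun t ht => hc t (by linear_combination ht)⟩
  obtain ⟨c, hc⟩ := hc
  have ha : ∃ a : F, a ∉ ({0, 1} : Finset F) := by
    by_contra! h
    have : Finset.univ ⊆ ({0, 1} : Finset F) := fun x _ => h x
    have := (Finset.card_le_card this).trans Finset.card_le_two
    rw [Finset.card_univ] at this
    omega
  obtain ⟨a, ha⟩ := ha
  simp only [Finset.mem_insert, Finset.mem_singleton, not_or] at ha
  refine ⟨a, c, ha.1, ha.2, hc, fun t ht => hc (t / a) ?_⟩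
  have := ha.1
  field_simp
  linear_combination ht

def gq (F : Type) [Field F] (a c : F) (w : Fin 3 → F) : F :=
  (w 1 ^ 2 - w 0 * w 2) * ((w 2 + w 1 + c * w 0) * (w 2 + a * w 1 + a ^ 2 * c * w 0))

lemma count_aux (F : Type) [Field F] [Fintype F] (a c : F) (h1 : a ≠ 1)
    (hc : ∀ t : F, t ^ 2 + t + c ≠ 0) (hac : ∀ t : F, t ^ 2 + a * t + a ^ 2 * c ≠ 0) :
    {w : Fin 3 → F | gq F a c w = 0}.ncard + Fintype.card F + 1 = 3 * Fintype.card F ^ 2 := by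
  classical
  set q := Fintype.card F with hq
  let C : Set (Fin 3 → F) := {w | w 1 ^ 2 - w 0 * w 2 = 0}
  let L : F → F → Set (Fin 3 → F) := fun b d => {w | w 2 + b * w 1 + d * w 0 = 0}
  have hFF : (Set.univ : Set (F × F)).ncard = q ^ 2 := by
    rw [Set.ncard_univ, Nat.card_eq_fintype_card, Fintype.card_prod, sq]
  have hL : ∀ b d, (L b d).ncard = q ^ 2 := by
    intro b d
    have : L b d = (fun p : F × F => ![p.1, p.2, - b * p.2 - d * p.1]) '' Set.univ := by
      ext w
      simp only [L, Set.mem_ofPred_eq, Set.image_univ, Set.mem_range, Prod.exists]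
      constructor
      · intro h
        refine ⟨w 0, w 1, ?_⟩
        ext i; fin_cases i <;> simp
        linear_combination -h
      · rintro ⟨x, y, rfl⟩
        simp
        ring
    rw [this, Set.ncard_image_of_injective, hFF]
    rintro ⟨x, y⟩ ⟨x', y'⟩ h
    have e0 := congrFun h 0
    have e1 := congrFun h 1
    simp at e0 e1
    simp [e0, e1]
  have hC : C.ncard = q ^ 2 := by
    have : C = (fun p : F × F => if p.1 = 0 then ![0, 0, p.2] else ![p.1, p.2, p.2 ^ 2 / p.1])
        '' Set.univ := by
      ext w
      simp only [C, Set.mem_ofPred_eq, Set.image_univ, Set.mem_range, Prod.exists]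
      constructor
      · intro h
        by_cases h0 : w 0 = 0
        · refine ⟨0, w 2, ?_⟩
          have h1 : w 1 = 0 := by simpa [h0] using h
          ext i; fin_cases i <;> simp [h0, h1]
        · refine ⟨w 0, w 1, ?_⟩
          rw [if_neg h0]
          ext i; fin_cases i <;> simp
          field_simp
          linear_combination h
      · rintro ⟨x, y, rfl⟩
        by_cases h0 : x = 0
        · simp [h0]
        · simp [h0]; field_simp; simp
    rw [this, Set.ncard_image_of_injective, hFF]
    rintro ⟨x, y⟩ ⟨x', y'⟩ h
    have e0 := congrFun h 0
    have e1 := congrFun h 1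
    have e2 := congrFun h 2
    by_cases hx : x = 0 <;> by_cases hx' : x' = 0 <;> simp [hx, hx'] at e0 e1 e2 ⊢
    · exact e2
    · exact absurd e0.symm hx'
    · exact ⟨e0, e1⟩
  have hLL : (L 1 c ∩ L a (a ^ 2 * c)).ncard = q := by
    have : L 1 c ∩ L a (a ^ 2 * c) = (fun x : F => ![x, -(1 + a) * c * x, a * c * x]) '' Set.univ := by
      ext w
      simp only [L, Set.mem_inter_iff, Set.mem_ofPred_eq, Set.image_univ, Set.mem_range]
      constructor
      · rintro ⟨h, h'⟩
        have e1 : w 1 = -(1 + a) * c * w 0 := by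
          have : (1 - a) ≠ 0 := sub_ne_zero.mpr h1.symm
          apply mul_left_cancel₀ this
          linear_combination h - h'
        refine ⟨w 0, ?_⟩
        ext i; fin_cases i <;> simp
        · rw [e1]; ring
        · linear_combination -h + e1
      · rintro ⟨x, rfl⟩
        simp
        constructor <;> ring
    rw [this, Set.ncard_image_of_injective, Set.ncard_univ, Nat.card_eq_fintype_card]
    intro x x' h
    simpa using congrFun h 0
  have hCL : ∀ b d, (∀ t : F, t ^ 2 + b * t + d ≠ 0) → ∀ w, w ∈ C → w ∈ L b d → w = 0 := by
    intro b d hbd w hw hw'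
    simp only [C, L, Set.mem_ofPred_eq] at hw hw'
    by_cases h0 : w 0 = 0
    · have h1 : w 1 = 0 := by simpa [h0] using hw
      have h2 : w 2 = 0 := by simpa [h0, h1] using hw'
      ext i; fin_cases i <;> simp [h0, h1, h2]
    · exfalso
      apply hbd (w 1 / w 0)
      field_simp
      linear_combination w 0 * hw' + hw
  have hi : C ∩ (L 1 c ∪ L a (a ^ 2 * c)) = {0} := by
    ext w
    simp only [Set.mem_inter_iff, Set.mem_union, Set.mem_singleton_iff]
    constructor
    · rintro ⟨h, h' | h'⟩
      · exact hCL _ _ (by simpa using hc) w h h'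
      · exact hCL _ _ hac w h h'
    · rintro rfl
      simp [C, L]
  have hS : {w : Fin 3 → F | gq F a c w = 0} = C ∪ (L 1 c ∪ L a (a ^ 2 * c)) := by
    ext w
    simp [gq, C, L]
  have k1 := Set.ncard_union_add_ncard_inter (L 1 c) (L a (a ^ 2 * c))
  have k2 := Set.ncard_union_add_ncard_inter C (L 1 c ∪ L a (a ^ 2 * c))
  rw [hi, Set.ncard_singleton, hC] at k2
  rw [hLL, hL, hL] at k1
  rw [hS]
  omega

lemma proj_count (F : Type) [Field F] [Fintype F] (f : MvPolynomial (Fin 3) F)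
    (hf : f.IsHomogeneous 4) :
    {w : Fin 3 → F | eval w f = 0}.ncard =
      {x : Projectivization F (Fin 3 → F) | eval x.rep f = 0}.ncard * (Fintype.card F - 1) + 1 := by
  classical
  have hs : ∀ (u : F) (w : Fin 3 → F), eval (u • w) f = u ^ 4 * eval w f := by
    intro u w
    rw [eval_eq', eval_eq', Finset.mul_sum]
    refine Finset.sum_congr rfl fun d hd => ?_
    have h4 : ∑ i, d i = 4 := by
      have h := hf (mem_support_iff.mp hd)
      simpa [Finsupp.weight_apply, Finsupp.sum_fintype] using h
    simp only [Pi.smul_apply, smul_eq_mul, mul_pow, Finset.prod_mul_distrib]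
    rw [Finset.prod_pow_eq_pow_sum, h4]
    ring
  set S := {x : Projectivization F (Fin 3 → F) | eval x.rep f = 0} with hS
  have him : {w : Fin 3 → F | eval w f = 0} =
      insert 0 ((fun p : Projectivization F (Fin 3 → F) × Fˣ => p.2 • p.1.rep) ''
        (S ×ˢ (Set.univ : Set Fˣ))) := by
    ext w
    simp only [Set.mem_insert_iff, Set.mem_image, Set.mem_prod, Set.mem_univ, and_true,
      Prod.exists, Set.mem_ofPred_eq, hS]
    constructor
    · intro h
      by_cases hw : w = 0
      · exact Or.inl hw
      · right
        obtain ⟨u, hu⟩ := Projectivization.exists_smul_eq_mk_rep F w hw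
        refine ⟨Projectivization.mk F w hw, u⁻¹, ?_, ?_⟩
        · rw [← hu, Units.smul_def, hs, h, mul_zero]
        · rw [← hu, inv_smul_smul]
    · rintro (rfl | ⟨x, u, hx, rfl⟩)
      · have := hs 0 0
        simpa using this
      · rw [Units.smul_def, hs, hx, mul_zero]
  rw [him, Set.ncard_insert_of_notMem, Set.ncard_image_of_injective, Set.ncard_prod,
    Set.ncard_univ, Nat.card_eq_fintype_card, Fintype.card_units]
  · rintro ⟨x, u⟩ ⟨y, t⟩ h
    simp only at h
    have hxy : x = y := by
      rw [← x.mk_rep, ← y.mk_rep, Projectivization.mk_eq_mk_iff]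
      refine ⟨u⁻¹ * t, ?_⟩
      rw [mul_smul, ← h, inv_smul_smul]
    subst hxy
    have hut : (u : F) = t := by
      have h' : (u : F) • x.rep = (t : F) • x.rep := h
      exact smul_left_injective F x.rep_nonzero h'
    rw [Units.ext hut]
  · rintro ⟨⟨x, u⟩, -, h⟩
    have h' : (u : F) • x.rep = 0 := h
    rcases smul_eq_zero.mp h' with h | h
    · exact u.ne_zero h
    · exact x.rep_nonzero h

/-- For `q ≥ 4`, the bound `3q + 2` is attained by some plane quartic over `F_q` passing
through the degree-3 closed point. -/
theorem stmt_14 (q : ℕ) (hq : IsPrimePow q) (hq4 : 4 ≤ q)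
    (F E : Type) [Field F] [Fintype F] [Field E] [Fintype E] [Algebra F E]
    (hF : Fintype.card F = q) (hE : Fintype.card E = q ^ 3)
    -- `v` represents a degree-3 closed point of `P²`: its three Frobenius conjugates are
    -- pairwise distinct and non-collinear (equivalently, linearly independent).
    (v : Fin 3 → E)
    (hv : LinearIndependent E ![v, fun i => v i ^ q, fun i => v i ^ q ^ 2]) :
    ∃ f : MvPolynomial (Fin 3) F, f ≠ 0 ∧ f.IsHomogeneous 4 ∧
      MvPolynomial.aeval v f = 0 ∧
      {x : Projectivization F (Fin 3 → F) | MvPolynomial.eval x.rep f = 0}.ncard = 3 * q + 2 := by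
  classical
  have hfin : Module.finrank F E = 3 := by
    have h := Module.card_eq_pow_finrank (K := F) (V := E)
    rw [hE, hF] at h
    exact (Nat.pow_right_injective (by omega : 2 ≤ q) h).symm
  -- the coordinates of `v` form a basis of `E` over `F`
  have hli : LinearIndependent F v := by
    rw [Fintype.linearIndependent_iff]
    intro g hg
    have hfr : ∀ k : ℕ, ∑ i, algebraMap F E (g i) * v i ^ q ^ k = 0 := by
      intro k
      induction k with
      | zero => simpa [Algebra.smul_def] using hg
      | succ k ih =>
        have h := congrArg (FiniteField.frobeniusAlgHom F E) ih
        simp only [map_sum, map_mul, map_zero, AlgHom.commutes, map_pow,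
          FiniteField.coe_frobeniusAlgHom, hF] at h
        rw [← h]
        refine Finset.sum_congr rfl fun i _ => ?_
        rw [← pow_mul, pow_succ, mul_comm (q ^ k) q]
    have hM : IsUnit (Matrix.of ![v, fun i => v i ^ q, fun i => v i ^ q ^ 2]) := by
      rw [← Matrix.linearIndependent_rows_iff_isUnit]
      exact hv
    have hz : (Matrix.of ![v, fun i => v i ^ q, fun i => v i ^ q ^ 2]).mulVec
        (fun i => algebraMap F E (g i)) = 0 := by
      ext j
      have h0 := hfr 0
      have h1 := hfr 1
      have h2 := hfr 2
      fin_cases j <;> simp [Matrix.mulVec, dotProduct]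
      · simpa [mul_comm] using h0
      · simpa [mul_comm] using h1
      · simpa [mul_comm] using h2
    have hinj := Matrix.mulVec_injective_of_isUnit hM
    have h0 := hinj (hz.trans (Matrix.mulVec_zero _).symm)
    intro i
    have := congrFun h0 i
    simpa using this
  let B : Module.Basis (Fin 3) F E :=
    basisOfLinearIndependentOfCardEqFinrank hli (by simp [hfin])
  have hB : ∀ i, B i = v i := fun i => by simp [B]
  let pb := Field.powerBasisOfFiniteOfSeparable F E
  have hdim : pb.dim = 3 := by rw [← pb.finrank, hfin]
  let R : Module.Basis (Fin 3) F E := pb.basis.reindex (finCongr hdim)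
  have hR : ∀ i : Fin 3, R i = pb.gen ^ (i : ℕ) := fun i => by simp [R]
  let A : Matrix (Fin 3) (Fin 3) F := fun j i => B.repr (R j) i
  have hAt : A = (B.toMatrix R).transpose := rfl
  have hA : IsUnit A := by
    rw [hAt, Matrix.isUnit_transpose]
    have := B.invertibleToMatrix R
    exact isUnit_of_invertible _
  have hbij : Function.Bijective A.mulVec := by
    have := Matrix.mulVec_injective_of_isUnit hA
    exact ⟨this, Finite.injective_iff_surjective.mp this⟩
  obtain ⟨a, c, ha0, ha1, hc, hac⟩ := quad_aux F (by omega)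
  let m : Fin 3 → MvPolynomial (Fin 3) F := fun j => ∑ i, C (A j i) * X i
  have hm : ∀ j, (m j).IsHomogeneous 1 := by
    intro j
    refine IsHomogeneous.sum _ _ _ fun i _ => ?_
    simpa using (isHomogeneous_C (Fin 3) (A j i)).mul (isHomogeneous_X F i)
  have hme : ∀ j w, eval w (m j) = A.mulVec w j := by
    intro j w
    simp [m, Matrix.mulVec, dotProduct]
  have hmv : ∀ j, aeval v (m j) = pb.gen ^ (j : ℕ) := by
    intro j
    rw [← hR, ← B.sum_repr (R j)]
    simp [m, A, hB, Algebra.smul_def]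
  have hCm : ∀ (b : F) j, (C b * m j).IsHomogeneous 1 := by
    intro b j
    simpa using (isHomogeneous_C (Fin 3) b).mul (hm j)
  let f : MvPolynomial (Fin 3) F := (m 1 ^ 2 - m 0 * m 2) *
    ((m 2 + m 1 + C c * m 0) * (m 2 + C a * m 1 + C (a ^ 2 * c) * m 0))
  have hfe : ∀ w, eval w f = gq F a c (A.mulVec w) := by
    intro w
    simp only [f, gq, map_mul, map_add, map_sub, map_pow, eval_C, hme]
  have hfh : f.IsHomogeneous 4 := by
    have h1 : (m 1 ^ 2 - m 0 * m 2).IsHomogeneous 2 :=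
      ((hm 1).pow 2).sub ((hm 0).mul (hm 2))
    have h2 : (m 2 + m 1 + C c * m 0).IsHomogeneous 1 := ((hm 2).add (hm 1)).add (hCm c 0)
    have h3 : (m 2 + C a * m 1 + C (a ^ 2 * c) * m 0).IsHomogeneous 1 :=
      ((hm 2).add (hCm a 1)).add (hCm _ 0)
    exact h1.mul (h2.mul h3)
  refine ⟨f, ?_, hfh, ?_, ?_⟩
  · intro h0
    obtain ⟨w, hw⟩ := hbij.2 ![0, 1, 0]
    have := hfe w
    rw [h0, hw] at this
    simp [gq] at this
    exact ha0 this.symm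
  · simp only [f, map_mul, map_sub, map_pow, hmv]
    simp
  · have h1 := proj_count F f hfh
    have h2 := count_aux F a c ha1 hc hac
    have h3 : {w : Fin 3 → F | eval w f = 0}.ncard = {w : Fin 3 → F | gq F a c w = 0}.ncard := by
      rw [← Set.ncard_preimage_of_injective_subset_range hbij.1 (s := {w | gq F a c w = 0})
        (by rw [hbij.2.range_eq]; exact Set.subset_univ _)]
      congr 1
      ext w
      simp [hfe]
    rw [h3] at h1
    rw [h1, hF] at h2
    obtain ⟨k, rfl⟩ : ∃ k, q = k + 1 := ⟨q - 1, by omega⟩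
    simp only [Nat.add_sub_cancel] at h2
    have hk : 0 < k := by omega
    apply Nat.eq_of_mul_eq_mul_right hk
    nlinarith
end
end
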